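/- arXiv:0911.5086 — 3 statements merged into one kernel-verified Lean document; each statement's English description precedes it below -/
import Mathlib

section
/- Let d ≥ 2 and m ≥ 2, let Π_1, …, Π_m be parallel hyperplanes in E^{d+1} with Π_j above Π_i for j > i, let P_i ⊂ Π_i be finite sets with each 𝒫_i = conv(P_i) d-dimensional, P = P_1 ∪ … ∪ P_m, 𝒫 = conv(P), 𝒫_1 = 𝒫 ∩ Π_1 and 𝒫_m = 𝒫 ∩ Π_m. Let y be a point beyond the facet 𝒫_1 and beneath every other facet of 𝒫, let z be a point beyond the facet 𝒫_m and beneath every other facet of 𝒫, and let Q = conv(P ∪ {y, z}). Then for every 0 ≤ k ≤ d: f_k(Q) = f_k(𝒫) + f_{k−1}(∂𝒫_1) + f_{k−1}(∂𝒫_m) − α_k, where f_{k−1}(∂𝒫_ℓ) denotes the number of (k−1)-dimensional proper exposed faces of 𝒫_ℓ, with the convention f_{−1}(∂𝒫_ℓ) = 1 (counting the empty face), and where α_k = 0 for 0 ≤ k < d and α_d = 2. (Equation (6) in the proof of Lemma 2.5.) -/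
open Set Pointwise RealInnerProductSpace

/-- The dimension of the affine hull of a set. -/
noncomputable def adim {N : ℕ} (F : Set (EuclideanSpace ℝ (Fin N))) : ℕ :=
  Module.finrank ℝ (vectorSpan ℝ F)

/-- The number of `k`-dimensional nonempty exposed faces of `C`. -/
noncomputable def fCount {N : ℕ} (C : Set (EuclideanSpace ℝ (Fin N))) (k : ℕ) : ℕ :=
  {F : Set (EuclideanSpace ℝ (Fin N)) |
    IsExposed ℝ C F ∧ F.Nonempty ∧ adim F = k}.ncard

/-- The number of `k`-dimensional nonempty *proper* exposed faces of `C` (faces of the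
boundary complex `∂C`). -/
noncomputable def bCount {N : ℕ} (C : Set (EuclideanSpace ℝ (Fin N))) (k : ℕ) : ℕ :=
  {F : Set (EuclideanSpace ℝ (Fin N)) |
    IsExposed ℝ C F ∧ F.Nonempty ∧ F ≠ C ∧ adim F = k}.ncard

/-- `F` is a facet of `C`: an exposed face of dimension one less than `C`. -/
def IsFacetOf {N : ℕ} (C F : Set (EuclideanSpace ℝ (Fin N))) : Prop :=
  IsExposed ℝ C F ∧ F.Nonempty ∧ adim F + 1 = adim C

/-- `p` is beyond the facet `F` of `C`. -/
def IsBeyond {N : ℕ} (C F : Set (EuclideanSpace ℝ (Fin N)))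
    (p : EuclideanSpace ℝ (Fin N)) : Prop :=
  ∀ x ∈ C, x ∉ (affineSpan ℝ F : Set (EuclideanSpace ℝ (Fin N))) →
    (affineSpan ℝ F).SOppSide p x

/-- `p` is beneath the facet `F` of `C`. -/
def IsBeneath {N : ℕ} (C F : Set (EuclideanSpace ℝ (Fin N)))
    (p : EuclideanSpace ℝ (Fin N)) : Prop :=
  ∀ x ∈ C, x ∉ (affineSpan ℝ F : Set (EuclideanSpace ℝ (Fin N))) →
    (affineSpan ℝ F).SSameSide p x

/-!
Let `y` be beyond the facet `F` of a polytope `K` and beneath every other facet. Passing from `K`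
to `conv (K ∪ {y})` removes exactly one face, namely `F`, and adds exactly the pyramids with apex
`y` over the proper faces of `F`, the empty one included: a segment from `y` to a point of `K`
outside `F` runs through the interior of `K`, so a supporting hyperplane through `y` meets `K`
inside `F`; conversely a hyperplane supporting `K` along a proper face of `F` can be tilted about
that face until it passes through `y`. Counting faces by dimension gives the effect of one apex.
If `G` is a facet disjoint from `F`, then a point `z` beyond `G` alone is still beyond `G` alone
after `y` has been added, so the count applies a second time.
-/

section Polytope

variable {E : Type*} [AddCommGroup E] [Module ℝ E] {K : Set E}

/-- A polytope: the convex hull of a finite set. -/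
def IsPolytope (K : Set E) : Prop :=
  ∃ S : Set E, S.Finite ∧ convexHull ℝ S = K

lemma IsPolytope.convex (hK : IsPolytope K) : Convex ℝ K := by
  obtain ⟨S, -, rfl⟩ := hK
  exact convex_convexHull ℝ S

lemma IsPolytope.convexHull_insert (hK : IsPolytope K) (y : E) :
    IsPolytope (convexHull ℝ (insert y K)) := by
  obtain ⟨S, hS, rfl⟩ := hK
  refine ⟨insert y S, hS.insert y, ?_⟩
  rw [insert_eq, insert_eq, convexHull_convexHull_union_right]

lemma subset_convexHull_iUnion {ι : Type*} (P : ι → Set E) (i : ι) :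
    P i ⊆ convexHull ℝ (⋃ i, P i) :=
  (subset_iUnion P i).trans (subset_convexHull ℝ _)

end Polytope

section Faces

variable {E : Type*} [AddCommGroup E] [Module ℝ E] [TopologicalSpace E]
  {K S F : Set E} {l : StrongDual ℝ E} {M : ℝ} {x y : E}

lemma le_of_mem_convexHull (hl : ∀ x ∈ S, l x ≤ M) (hx : x ∈ convexHull ℝ S) : l x ≤ M :=
  convexHull_min (t := {x | l x ≤ M}) hl (convex_halfSpace_le l.toLinearMap.isLinear M) hx

lemma lt_of_mem_convexHull (hl : ∀ x ∈ S, l x < M) (hx : x ∈ convexHull ℝ S) : l x < M :=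
  convexHull_min (t := {x | l x < M}) hl (convex_halfSpace_lt l.toLinearMap.isLinear M) hx

lemma eq_of_mem_convexHull (hl : ∀ x ∈ S, l x = M) (hx : x ∈ convexHull ℝ S) : l x = M :=
  convexHull_min (t := {x | l x = M}) hl (convex_hyperplane l.toLinearMap.isLinear M) hx

lemma sep_convexHull (hl : ∀ x ∈ S, l x ≤ M) :
    {x ∈ convexHull ℝ S | l x = M} = convexHull ℝ {x ∈ S | l x = M} := by
  refine Subset.antisymm ?_ fun x hx =>
    ⟨convexHull_mono (sep_subset S _) hx, eq_of_mem_convexHull (fun _ hs => hs.2) hx⟩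
  rintro x ⟨hx, hxM⟩
  have hSsplit : S = {x ∈ S | l x = M} ∪ {x ∈ S | l x < M} := by
    ext s
    simp only [mem_union, mem_sep_iff, ← and_or_left, ← le_iff_eq_or_lt]
    exact (and_iff_left_of_imp (hl s)).symm
  have hlow : ∀ p ∈ convexHull ℝ {x ∈ S | l x < M}, l p < M := fun p hp =>
    lt_of_mem_convexHull (fun _ hs => hs.2) hp
  rcases eq_empty_or_nonempty {x ∈ S | l x = M} with hT | hT
  · rw [hSsplit, hT, empty_union] at hx
    exact absurd hxM (hlow x hx).ne
  rcases eq_empty_or_nonempty {x ∈ S | l x < M} with hU | hU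
  · rwa [hSsplit, hU, union_empty] at hx
  rw [hSsplit, convexHull_union hT hU, mem_convexJoin] at hx
  obtain ⟨p, hp, q, hq, α, β, -, hβ, hαβ, rfl⟩ := hx
  have hpM : l p = M := eq_of_mem_convexHull (fun _ hs => hs.2) hp
  have hβ0 : β * (M - l q) = 0 := by
    rw [← eq_sub_iff_add_eq] at hαβ
    simp only [map_add, map_smul, smul_eq_mul, hpM, hαβ] at hxM
    linarith
  have hβ0 : β = 0 := (mul_eq_zero.1 hβ0).resolve_right (sub_pos.2 (hlow q hq)).ne'
  simpa [hβ0, show α = 1 by linarith] using hp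

lemma isExposed_sep (hl : ∀ x ∈ K, l x ≤ M) : IsExposed ℝ K {x ∈ K | l x = M} := by
  rintro ⟨w, hw, rfl⟩
  refine ⟨l, Set.ext fun x => and_congr_right fun hx => ?_⟩
  exact ⟨fun h => h ▸ hl, fun h => (hl x hx).antisymm (h w hw)⟩

lemma exists_eq_sep_of_isExposed (hF : IsExposed ℝ K F) (hne : F.Nonempty) :
    ∃ (l : StrongDual ℝ E) (M : ℝ), (∀ x ∈ K, l x ≤ M) ∧ {x ∈ K | l x = M} = F := by
  obtain ⟨l, rfl⟩ := hF hne
  obtain ⟨w, hw⟩ := hne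
  refine ⟨l, l w, hw.2, Set.ext fun x => and_congr_right fun hx => ?_⟩
  exact ⟨fun h => h ▸ hw.2, fun h => (hw.2 x hx).antisymm (h w hw.1)⟩

lemma lt_of_mem_interior [ContinuousAdd E] [ContinuousSMul ℝ E] (hl : ∀ x ∈ K, l x ≤ M)
    (hl0 : l ≠ 0) (hx : x ∈ interior K) : l x < M := by
  have himage : l '' interior K ⊆ interior (Iic M) :=
    interior_maximal (image_subset_iff.2 fun a ha => hl a (interior_subset ha))
      (l.isOpenMap_of_ne_zero hl0 _ isOpen_interior)
  rw [interior_Iic] at himage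
  exact himage (mem_image_of_mem l hx)

/-- The nonempty exposed faces of `K` other than `K`, i.e. the faces of the boundary complex. -/
def properFaces (K : Set E) : Set (Set E) :=
  {F | IsExposed ℝ K F ∧ F.Nonempty ∧ F ≠ K}

lemma sep_mem_properFaces [ContinuousAdd E] [ContinuousSMul ℝ E] (hK : (interior K).Nonempty)
    (hl0 : l ≠ 0) (hl : ∀ x ∈ K, l x ≤ M) (hne : {x ∈ K | l x = M}.Nonempty) :
    {x ∈ K | l x = M} ∈ properFaces K := by
  obtain ⟨q, hq⟩ := hK
  exact ⟨isExposed_sep hl, hne, fun h =>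
    (lt_of_mem_interior hl hl0 hq).ne (h.symm ▸ interior_subset hq : q ∈ {x ∈ K | l x = M}).2⟩

lemma ne_zero_of_sep_mem_properFaces (h : {x ∈ K | l x = M} ∈ properFaces K) : l ≠ 0 := by
  rintro rfl
  obtain ⟨w, -, hw⟩ := h.2.1
  exact h.2.2 (sep_eq_self_iff_mem_true.2 fun _ _ => hw)

lemma exists_eq_sep_of_mem_properFaces (hF : F ∈ properFaces K) :
    ∃ (l : StrongDual ℝ E) (M : ℝ), l ≠ 0 ∧ (∀ x ∈ K, l x ≤ M) ∧ {x ∈ K | l x = M} = F := by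
  obtain ⟨l, M, hl, rfl⟩ := exists_eq_sep_of_isExposed hF.1 hF.2.1
  exact ⟨l, M, ne_zero_of_sep_mem_properFaces hF, hl, rfl⟩

/-! ### Adding a point -/

lemma interior_convexHull_insert_nonempty (hint : (interior K).Nonempty) (y : E) :
    (interior (convexHull ℝ (insert y K))).Nonempty :=
  hint.mono (interior_mono ((subset_insert y K).trans (subset_convexHull ℝ _)))

lemma sep_convexHull_insert_of_lt (hK : Convex ℝ K) (hl : ∀ x ∈ K, l x ≤ M) (hy : l y < M) :
    {x ∈ convexHull ℝ (insert y K) | l x = M} = {x ∈ K | l x = M} := by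
  rw [sep_convexHull (forall_mem_insert.2 ⟨hy.le, hl⟩)]
  have hsep : {x ∈ insert y K | l x = M} = {x ∈ K | l x = M} := by
    ext x
    refine ⟨?_, fun hx => ⟨mem_insert_of_mem y hx.1, hx.2⟩⟩
    rintro ⟨rfl | hx, hxM⟩
    exacts [absurd hxM hy.ne, ⟨hx, hxM⟩]
  rw [hsep, ← sep_convexHull hl, hK.convexHull_eq]

lemma sep_convexHull_insert_of_eq (hl : ∀ x ∈ K, l x ≤ M) (hy : l y = M) :
    {x ∈ convexHull ℝ (insert y K) | l x = M} =
      convexHull ℝ (insert y {x ∈ K | l x = M}) := by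
  rw [sep_convexHull (forall_mem_insert.2 ⟨hy.le, hl⟩)]
  congr 1
  ext x
  simp only [mem_sep_iff, mem_insert_iff, or_and_right]
  exact or_congr_left (and_iff_left_of_imp fun h => h ▸ hy)

/-- The pyramids with apex `y` over the proper exposed faces of `F`. Since `∅` is exposed in
every set, the degenerate pyramid `{y}` over the empty face is included. -/
def pyramids (F : Set E) (y : E) : Set (Set E) :=
  (fun G => convexHull ℝ (insert y G)) '' {G | IsExposed ℝ F G ∧ G ≠ F}

lemma apex_mem_of_mem_pyramids {P : Set E} (hP : P ∈ pyramids F y) : y ∈ P := by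
  obtain ⟨G, -, rfl⟩ := hP
  exact subset_convexHull ℝ _ (mem_insert y G)

lemma sep_pyramid_eq_base {G : Set E} (hG : Convex ℝ G) (hGM : ∀ x ∈ G, l x = M)
    (hy : M < l y) : {x ∈ convexHull ℝ (insert y G) | l x = M} = G := by
  have h := sep_convexHull_insert_of_lt (l := -l) (M := -M) (y := y) hG
    (fun x hx => (neg_inj.2 (hGM x hx)).le) (neg_lt_neg hy)
  simp only [neg_apply, neg_inj] at h
  rw [h]
  exact sep_eq_self_iff_mem_true.2 hGM

lemma IsPolytope.isClosed [IsTopologicalAddGroup E] [ContinuousSMul ℝ E] [T2Space E]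
    (hK : IsPolytope K) : IsClosed K := by
  obtain ⟨S, hS, rfl⟩ := hK
  exact hS.isClosed_convexHull ℝ

lemma IsPolytope.finite_properFaces (hK : IsPolytope K) : (properFaces K).Finite := by
  obtain ⟨S, hS, rfl⟩ := hK
  refine (hS.finite_subsets.image (convexHull ℝ)).subset fun F hF => ?_
  obtain ⟨l, M, -, hl, rfl⟩ := exists_eq_sep_of_mem_properFaces hF
  exact ⟨{x ∈ S | l x = M}, sep_subset S _,
    (sep_convexHull fun x hx => hl x (subset_convexHull ℝ S hx)).symm⟩

/-! ### Tilting a supporting hyperplane about a face -/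

variable {v : StrongDual ℝ E} {c : ℝ}

lemma IsPolytope.exists_critical_slope (hK : IsPolytope K) (hv : ∀ x ∈ K, v x ≤ c)
    (hlt : ∃ x ∈ K, v x < c) (hl : ∀ x ∈ K, v x = c → l x ≤ M) :
    ∃ s₀ : ℝ, (∀ x ∈ K, (l + s₀ • v) x ≤ M + s₀ * c) ∧
      ∃ p ∈ K, v p < c ∧ (l + s₀ • v) p = M + s₀ * c := by
  obtain ⟨S, hS, rfl⟩ := hK
  have hSK : S ⊆ convexHull ℝ S := subset_convexHull ℝ S
  have hne : {p ∈ S | v p < c}.Nonempty := by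
    by_contra! hempty
    obtain ⟨x, hx, hxc⟩ := hlt
    refine hxc.ne (eq_of_mem_convexHull (fun p hp => ?_) hx)
    exact (hv p (hSK hp)).antisymm (not_lt.1 fun h => (hempty ▸ ⟨hp, h⟩ : p ∈ (∅ : Set E)))
  obtain ⟨p, ⟨hpS, hpc⟩, hmax⟩ := Set.exists_max_image {p ∈ S | v p < c}
    (fun p => (l p - M) / (c - v p)) (hS.subset (sep_subset S _)) hne
  refine ⟨(l p - M) / (c - v p), fun x hx => le_of_mem_convexHull (fun q hq => ?_) hx,
    p, hSK hpS, hpc, ?_⟩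
  · simp only [add_apply, smul_apply, smul_eq_mul]
    rcases (hv q (hSK hq)).eq_or_lt with hqc | hqc
    · rw [hqc]
      linarith [hl q (hSK hq) hqc]
    · have := (div_le_iff₀ (sub_pos.2 hqc)).1 (hmax q ⟨hq, hqc⟩)
      linarith
  · have := div_mul_cancel₀ (l p - M) (sub_pos.2 hpc).ne'
    simp only [add_apply, smul_apply, smul_eq_mul]
    linarith

lemma tilt_le {s₀ s : ℝ} (hs : s₀ ≤ s) (hv : ∀ x ∈ K, v x ≤ c)
    (hs₀ : ∀ x ∈ K, (l + s₀ • v) x ≤ M + s₀ * c) :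
    ∀ x ∈ K, (l + s • v) x ≤ M + s * c := by
  intro x hx
  have := hs₀ x hx
  simp only [add_apply, smul_apply, smul_eq_mul] at this ⊢
  nlinarith [hv x hx]

lemma sep_tilt_eq {s₀ s : ℝ} (hs : s₀ < s) (hv : ∀ x ∈ K, v x ≤ c)
    (hs₀ : ∀ x ∈ K, (l + s₀ • v) x ≤ M + s₀ * c) :
    {x ∈ K | (l + s • v) x = M + s * c} = {x ∈ {x ∈ K | v x = c} | l x = M} := by
  ext x
  simp only [mem_sep_iff, and_assoc]
  refine and_congr_right fun hx => ⟨fun h => ?_, fun ⟨hvx, hlx⟩ => by simp [hvx, hlx]⟩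
  have hle := hs₀ x hx
  simp only [add_apply, smul_apply, smul_eq_mul] at h hle
  have hvx : v x = c := (hv x hx).antisymm (not_lt.1 fun hlt => by nlinarith)
  exact ⟨hvx, by rw [hvx] at h; linarith⟩

end Faces

section Segment

variable {E : Type*} [AddCommGroup E] [Module ℝ E] [TopologicalSpace E]
  {l : StrongDual ℝ E} {M c : ℝ} {x y p : E}

lemma lt_of_mem_openSegment (hx : l x ≤ M) (hy : l y < M) (hp : p ∈ openSegment ℝ x y) :
    l p < M := by
  obtain ⟨α, β, hα, hβ, hαβ, rfl⟩ := hp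
  calc l (α • x + β • y) = α * l x + β * l y := by simp
    _ < α * M + β * M := add_lt_add_of_le_of_lt (by gcongr) (by gcongr)
    _ = M := by rw [← add_mul, hαβ, one_mul]

lemma le_of_mem_openSegment (hx : M ≤ l x) (hy : M ≤ l y) (hp : p ∈ openSegment ℝ x y) :
    M ≤ l p :=
  (convex_halfSpace_ge l.toLinearMap.isLinear M).openSegment_subset hx hy hp

lemma exists_mem_openSegment_lt [ContinuousAdd E] [ContinuousSMul ℝ E] (y : E) (hx : l x < c) :
    ∃ p ∈ openSegment ℝ x y, l p < c := by
  have hxcl : x ∈ closure (openSegment ℝ x y) :=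
    segment_subset_closure_openSegment (left_mem_segment ℝ x y)
  obtain ⟨p, hpc, hp⟩ :=
    mem_closure_iff.1 hxcl _ (isOpen_lt l.continuous continuous_const) hx
  exact ⟨p, hp, hpc⟩

lemma exists_mem_openSegment_mem_frontier [ContinuousAdd E] [ContinuousSMul ℝ E] {K : Set E}
    (hK : IsClosed K) (hx : x ∉ K) (hy : y ∈ interior K) :
    ∃ b ∈ openSegment ℝ x y, b ∈ frontier K := by
  suffices h : ∃ b ∈ segment ℝ x y, b ∈ frontier K by
    obtain ⟨b, hb, hbK⟩ := h
    refine ⟨b, mem_openSegment_of_ne_left_right ?_ ?_ hb, hbK⟩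
    · rintro rfl
      exact hx (hK.frontier_subset hbK)
    · rintro rfl
      exact hbK.2 hy
  by_contra! hcon
  obtain ⟨q, -, hqi, hqc⟩ := (convex_segment x y).isPreconnected (interior K) Kᶜ
    isOpen_interior hK.isOpen_compl
    (fun a ha => (em (a ∈ K)).imp
      (fun haK => by_contra fun hai => hcon a ha ⟨subset_closure haK, hai⟩) id)
    ⟨y, right_mem_segment ℝ x y, hy⟩ ⟨x, left_mem_segment ℝ x y, hx⟩
  exact hqc (interior_subset hqi)

lemma lt_of_sSameSide {s : AffineSubspace ℝ E} (hs : ∀ a ∈ s, l a = M) (h : s.SSameSide p x)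
    (hx : l x < M) : l p < M := by
  obtain ⟨⟨a, ha, b, hb, hray⟩, hps, hxs⟩ := h
  obtain ⟨r, r', hr, hr', heq⟩ := hray.exists_pos
    (vsub_ne_zero.2 (ne_of_mem_of_not_mem ha hps).symm)
    (vsub_ne_zero.2 (ne_of_mem_of_not_mem hb hxs).symm)
  have hl := congrArg l heq
  simp only [vsub_eq_sub, map_smul, map_sub, smul_eq_mul, hs a ha, hs b hb] at hl
  nlinarith

lemma lt_of_sOppSide {s : AffineSubspace ℝ E} (hs : ∀ a ∈ s, l a = M) (h : s.SOppSide p x)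
    (hx : l x < M) : M < l p := by
  obtain ⟨⟨a, ha, b, hb, hray⟩, hps, hxs⟩ := h
  obtain ⟨r, r', hr, hr', heq⟩ := hray.exists_pos
    (vsub_ne_zero.2 (ne_of_mem_of_not_mem ha hps).symm)
    (vsub_ne_zero.2 (ne_of_mem_of_not_mem hb hxs))
  have hl := congrArg l heq
  simp only [vsub_eq_sub, map_smul, map_sub, smul_eq_mul, hs a ha, hs b hb] at hl
  nlinarith

lemma eq_of_mem_affineSpan {F : Set E} (hF : ∀ x ∈ F, l x = M) (hx : x ∈ affineSpan ℝ F) :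
    l x = M :=
  affineSpan_induction (p := fun x => l x = M) hx hF fun c u v w hu hv hw => by
    simp [hu, hv, hw]

end Segment

section Dimension

variable {N : ℕ} {K F G : Set (EuclideanSpace ℝ (Fin N))}
  {l : StrongDual ℝ (EuclideanSpace ℝ (Fin N))} {M : ℝ} {y : EuclideanSpace ℝ (Fin N)}

lemma adim_mono (h : F ⊆ G) : adim F ≤ adim G :=
  Submodule.finrank_mono (vectorSpan_mono ℝ h)

lemma adim_le (F : Set (EuclideanSpace ℝ (Fin N))) : adim F ≤ N :=
  (Submodule.finrank_le _).trans_eq finrank_euclideanSpace_fin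

lemma adim_convexHull (F : Set (EuclideanSpace ℝ (Fin N))) :
    adim (convexHull ℝ F) = adim F := by
  rw [adim, adim, ← direction_affineSpan, affineSpan_convexHull, direction_affineSpan]

lemma nonempty_of_adim_pos (h : 0 < adim F) : F.Nonempty := by
  rw [nonempty_iff_ne_empty]
  rintro rfl
  rw [adim, vectorSpan_empty, finrank_bot] at h
  exact h.false

lemma adim_singleton (x : EuclideanSpace ℝ (Fin N)) : adim {x} = 0 := by
  rw [adim, vectorSpan_singleton, finrank_bot]

lemma adim_eq_iff_vectorSpan_eq_top : adim F = N ↔ vectorSpan ℝ F = ⊤ := by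
  refine ⟨fun h => Submodule.eq_top_of_finrank_eq ?_, fun h => ?_⟩
  · rwa [finrank_euclideanSpace_fin]
  · rw [adim, h, finrank_top, finrank_euclideanSpace_fin]

lemma adim_eq_of_interior_nonempty (hK : (interior K).Nonempty) : adim K = N := by
  have htop : affineSpan ℝ K = ⊤ :=
    top_le_iff.1 (isOpen_interior.affineSpan_eq_top hK ▸ affineSpan_mono ℝ interior_subset)
  rw [adim_eq_iff_vectorSpan_eq_top, ← direction_affineSpan, htop, AffineSubspace.direction_top]

lemma interior_nonempty_of_adim_eq (hK : Convex ℝ K) (hne : K.Nonempty) (h : adim K = N) :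
    (interior K).Nonempty := by
  rwa [hK.interior_nonempty_iff_affineSpan_eq_top,
    AffineSubspace.affineSpan_eq_top_iff_vectorSpan_eq_top_of_nonempty _ _ _ hne,
    ← adim_eq_iff_vectorSpan_eq_top]

lemma vectorSpan_le_ker (h : ∀ x ∈ F, l x = M) : vectorSpan ℝ F ≤ l.toLinearMap.ker := by
  rw [vectorSpan_def, Submodule.span_le]
  rintro _ ⟨a, ha, b, hb, rfl⟩
  simp [h a ha, h b hb]

lemma adim_lt (hl0 : l ≠ 0) (h : ∀ x ∈ F, l x = M) : adim F < N := by
  refine (adim_le F).lt_of_ne fun hF => hl0 ?_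
  have hker := vectorSpan_le_ker h
  rw [adim_eq_iff_vectorSpan_eq_top.1 hF, top_le_iff, LinearMap.ker_eq_top] at hker
  exact ContinuousLinearMap.coe_inj.1 hker

lemma adim_lt_adim_insert (hF : F.Nonempty) (h : ∀ x ∈ F, l x = M) (hy : l y ≠ M) :
    adim F < adim (insert y F) := by
  obtain ⟨x, hx⟩ := hF
  refine Submodule.finrank_lt_finrank_of_lt
    ((vectorSpan_mono ℝ (subset_insert y F)).lt_of_ne fun heq => hy ?_)
  have hmem : y -ᵥ x ∈ vectorSpan ℝ F :=
    heq ▸ vsub_mem_vectorSpan ℝ (mem_insert y F) (mem_insert_of_mem y hx)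
  simpa [h x hx, sub_eq_zero] using vectorSpan_le_ker h hmem

lemma adim_pyramid (hF : F.Nonempty) (h : ∀ x ∈ F, l x = M) (hy : l y ≠ M) :
    adim (convexHull ℝ (insert y F)) = adim F + 1 := by
  rw [adim_convexHull]
  exact (finrank_vectorSpan_insert_le_set ℝ F y).antisymm (adim_lt_adim_insert hF h hy)

lemma affineSpan_insert_ne_top (hF : adim F + 1 < N) (w : EuclideanSpace ℝ (Fin N)) :
    affineSpan ℝ (insert w F) ≠ ⊤ := by
  intro h
  have hle : adim (insert w F) ≤ adim F + 1 := finrank_vectorSpan_insert_le_set ℝ F w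
  rw [adim_eq_iff_vectorSpan_eq_top.2 (by rw [← direction_affineSpan, h,
    AffineSubspace.direction_top])] at hle
  exact hF.not_ge hle

lemma bCount_eq_ncard (K : Set (EuclideanSpace ℝ (Fin N))) (k : ℕ) :
    bCount K k = {F ∈ properFaces K | adim F = k}.ncard := by
  simp only [bCount, properFaces, mem_ofPred_eq, and_assoc]

lemma fCount_eq_bCount {k : ℕ} (hk : adim K ≠ k) : fCount K k = bCount K k := by
  refine congrArg ncard (Set.ext fun F => ?_)
  simp only [mem_ofPred_eq]
  refine and_congr_right fun _ => and_congr_right fun _ => ?_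
  exact ⟨fun hF => ⟨fun h => hk (h ▸ hF), hF⟩, And.right⟩

end Dimension

section GenericPoint

variable {E : Type*} [NormedAddCommGroup E] [NormedSpace ℝ E] [FiniteDimensional ℝ E]

lemma exists_notMem_affineSubspaces {U : Set E} (hU : IsOpen U) (hne : U.Nonempty)
    {A : Set (AffineSubspace ℝ E)} (hA : A.Finite) (htop : ⊤ ∉ A) :
    ∃ q ∈ U, ∀ s ∈ A, q ∉ s := by
  borelize E
  let μ : MeasureTheory.Measure E := MeasureTheory.Measure.addHaar
  have hnull : μ (⋃ s ∈ A, (s : Set E)) = 0 :=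
    (MeasureTheory.measure_biUnion_null_iff hA.countable).2 fun s hs =>
      MeasureTheory.Measure.addHaar_affineSubspace μ s (ne_of_mem_of_not_mem hs htop)
  by_contra! hcon
  refine (hU.measure_pos μ hne).ne' (MeasureTheory.measure_mono_null (fun q hq => ?_) hnull)
  obtain ⟨s, hs, hqs⟩ := hcon q hq
  exact mem_biUnion hs hqs

end GenericPoint

/-! ### Facets -/

section Facets

variable {N : ℕ} {K F G : Set (EuclideanSpace ℝ (Fin N))}
  {l : StrongDual ℝ (EuclideanSpace ℝ (Fin N))} {M : ℝ} {x y w : EuclideanSpace ℝ (Fin N)}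

lemma IsFacetOf.mem_properFaces (hF : IsFacetOf K F) : F ∈ properFaces K :=
  ⟨hF.1, hF.2.1, fun h => (Nat.succ_ne_self _) (h ▸ hF.2.2)⟩

lemma isFacetOf_iff (hK : (interior K).Nonempty) :
    IsFacetOf K F ↔ F ∈ properFaces K ∧ adim F + 1 = N := by
  have hdim : adim K = N := adim_eq_of_interior_nonempty hK
  exact ⟨fun h => ⟨h.mem_properFaces, h.2.2.trans hdim⟩,
    fun h => ⟨h.1.1, h.1.2.1, h.2.trans hdim.symm⟩⟩

-- Aim at an interior point `q` in general position: the segment from `w` to `q` then avoids all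
-- faces of codimension at least two, so it enters `K` through a facet.
lemma exists_isFacetOf_mem_openSegment (hK : IsPolytope K) (hint : (interior K).Nonempty)
    (hw : w ∉ K) : ∃ F, IsFacetOf K F ∧ ∃ q ∈ K, ∃ b ∈ openSegment ℝ w q, b ∈ F := by
  let A := (fun F => affineSpan ℝ (insert w F)) '' {F ∈ properFaces K | adim F + 1 < N}
  have hA : A.Finite := (hK.finite_properFaces.subset (sep_subset _ _)).image _
  have htop : ⊤ ∉ A := by
    rintro ⟨F, ⟨-, hF⟩, h⟩
    exact affineSpan_insert_ne_top hF w h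
  obtain ⟨q, hqK, hq⟩ := exists_notMem_affineSubspaces isOpen_interior hint hA htop
  obtain ⟨b, hb, hbK⟩ := exists_mem_openSegment_mem_frontier hK.isClosed hw hqK
  obtain ⟨f, hf0, hf⟩ := geometric_hahn_banach_of_nonempty_interior_point hK.convex hbK.2 hint
  have hbF : b ∈ {x ∈ K | f x = f b} := ⟨hK.isClosed.frontier_subset hbK, rfl⟩
  have hF : {x ∈ K | f x = f b} ∈ properFaces K := sep_mem_properFaces hint hf0 hf ⟨b, hbF⟩
  refine ⟨_, (isFacetOf_iff hint).2 ⟨hF, ?_⟩, q, interior_subset hqK, b, hb, hbF⟩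
  have hle : adim {x ∈ K | f x = f b} < N := adim_lt hf0 fun x hx => hx.2
  refine (Nat.succ_le_of_lt hle).eq_or_lt.resolve_right fun hlt => hq _ ⟨_, ⟨hF, hlt⟩, rfl⟩ ?_
  have hline : q ∈ line[ℝ, w, b] :=
    (mem_segment_iff_wbtw.1 (openSegment_subset_segment ℝ w q hb)).right_mem_affineSpan_of_left_ne
      (ne_of_mem_of_not_mem hbF.1 hw).symm
  refine affineSpan_mono ℝ ?_ hline
  exact insert_subset_insert (singleton_subset_iff.2 hbF)

lemma exists_isFacetOf_forall_le (hK : IsPolytope K) (hint : (interior K).Nonempty)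
    (hw : w ∉ K) : ∃ F, IsFacetOf K F ∧
      ∀ (l : StrongDual ℝ (EuclideanSpace ℝ (Fin N))) (M : ℝ),
        (∀ x ∈ K, l x ≤ M) → {x ∈ K | l x = M} = F → M ≤ l w := by
  obtain ⟨F, hF, q, hq, b, hb, hbF⟩ := exists_isFacetOf_mem_openSegment hK hint hw
  refine ⟨F, hF, fun l M hl hlF => ?_⟩
  by_contra! hlw
  rw [openSegment_symm] at hb
  exact (lt_of_mem_openSegment (hl q hq) hlw hb).ne (hlF.symm ▸ hbF : b ∈ {x ∈ K | l x = M}).2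

lemma mem_interior_of_forall_isFacetOf (hK : IsPolytope K) (hint : (interior K).Nonempty)
    (hw : ∀ F, IsFacetOf K F → ∃ (l : StrongDual ℝ (EuclideanSpace ℝ (Fin N))) (M : ℝ),
      (∀ x ∈ K, l x ≤ M) ∧ {x ∈ K | l x = M} = F ∧ l w < M) : w ∈ interior K := by
  choose! l M hl hlF hlw using hw
  have hfin : {F | IsFacetOf K F}.Finite :=
    hK.finite_properFaces.subset fun F hF => hF.mem_properFaces
  refine mem_interior.2 ⟨⋂ F ∈ {F | IsFacetOf K F}, {x | l F x < M F}, fun x hx => ?_,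
    hfin.isOpen_biInter fun F _ => isOpen_lt (l F).continuous continuous_const,
    mem_iInter₂.2 hlw⟩
  by_contra hxK
  obtain ⟨F, hF, hFl⟩ := exists_isFacetOf_forall_le hK hint hxK
  exact (hFl (l F) (M F) (hl F hF) (hlF F hF)).not_gt (mem_iInter₂.1 hx F hF)

lemma IsFacetOf.exists_lt (hF : IsFacetOf K {x ∈ K | l x = M}) (hl : ∀ x ∈ K, l x ≤ M) :
    ∃ x ∈ K, l x < M := by
  by_contra! hcon
  exact hF.mem_properFaces.2.2
    (sep_eq_self_iff_mem_true.2 fun x hx => (hl x hx).antisymm (hcon x hx))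

lemma IsBeneath.lt (hy : IsBeneath K F y) (hF : ∀ x ∈ F, l x = M) (hlt : ∃ x ∈ K, l x < M) :
    l y < M := by
  obtain ⟨x, hx, hxM⟩ := hlt
  have hspan : ∀ a ∈ affineSpan ℝ F, l a = M := fun a ha => eq_of_mem_affineSpan hF ha
  exact lt_of_sSameSide hspan (hy x hx fun h => hxM.ne (hspan x h)) hxM

lemma IsBeyond.lt (hy : IsBeyond K F y) (hF : ∀ x ∈ F, l x = M) (hlt : ∃ x ∈ K, l x < M) :
    M < l y := by
  obtain ⟨x, hx, hxM⟩ := hlt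
  have hspan : ∀ a ∈ affineSpan ℝ F, l a = M := fun a ha => eq_of_mem_affineSpan hF ha
  exact lt_of_sOppSide hspan (hy x hx fun h => hxM.ne (hspan x h)) hxM

/-- The point `y` is beyond the facet `F` of `K` and beneath every other facet, expressed
through the functionals supporting `K` along its facets. -/
structure IsBeyondOnly (K F : Set (EuclideanSpace ℝ (Fin N))) (y : EuclideanSpace ℝ (Fin N)) :
    Prop where
  isFacetOf : IsFacetOf K F
  lt_of_eq : ∀ (l : StrongDual ℝ (EuclideanSpace ℝ (Fin N))) (M : ℝ), (∀ x ∈ K, l x ≤ M) →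
    {x ∈ K | l x = M} = F → M < l y
  lt_of_ne : ∀ (l : StrongDual ℝ (EuclideanSpace ℝ (Fin N))) (M : ℝ), (∀ x ∈ K, l x ≤ M) →
    IsFacetOf K {x ∈ K | l x = M} → {x ∈ K | l x = M} ≠ F → l y < M

namespace IsBeyondOnly

lemma of_isBeyond (hF : IsFacetOf K F) (hy : IsBeyond K F y)
    (hy' : ∀ G, IsFacetOf K G → G ≠ F → IsBeneath K G y) : IsBeyondOnly K F y where
  isFacetOf := hF
  lt_of_eq := by
    rintro l M hl rfl
    exact hy.lt (fun x hx => hx.2) (hF.exists_lt hl)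
  lt_of_ne l M hl hG hne := (hy' _ hG hne).lt (fun x hx => hx.2) (hG.exists_lt hl)

lemma exists_eq_sep (hy : IsBeyondOnly K F y) :
    ∃ (v : StrongDual ℝ (EuclideanSpace ℝ (Fin N))) (c : ℝ), (∀ x ∈ K, v x ≤ c) ∧
      {x ∈ K | v x = c} = F ∧ c < v y := by
  obtain ⟨v, c, -, hv, hF⟩ := exists_eq_sep_of_mem_properFaces hy.isFacetOf.mem_properFaces
  exact ⟨v, c, hv, hF, hy.lt_of_eq v c hv hF⟩

lemma notMem (hy : IsBeyondOnly K F y) : y ∉ K := by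
  obtain ⟨v, c, hv, -, hvy⟩ := hy.exists_eq_sep
  exact fun hyK => hvy.not_ge (hv y hyK)

lemma exists_mem_openSegment_mem_interior (hy : IsBeyondOnly K F y) (hK : IsPolytope K)
    (hint : (interior K).Nonempty) (hx : x ∈ K) (hxF : x ∉ F) :
    ∃ p ∈ openSegment ℝ x y, p ∈ interior K := by
  obtain ⟨v, c, hv, rfl, -⟩ := hy.exists_eq_sep
  obtain ⟨p, hp, hpc⟩ :=
    exists_mem_openSegment_lt y ((hv x hx).lt_of_ne fun hxc => hxF ⟨hx, hxc⟩)
  refine ⟨p, hp, mem_interior_of_forall_isFacetOf hK hint fun G hG => ?_⟩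
  by_cases hGF : G = {x ∈ K | v x = c}
  · exact ⟨v, c, hv, hGF.symm, hpc⟩
  obtain ⟨l, M, -, hl, rfl⟩ := exists_eq_sep_of_mem_properFaces hG.mem_properFaces
  exact ⟨l, M, hl, rfl, lt_of_mem_openSegment (hl x hx) (hy.lt_of_ne l M hl hG hGF) hp⟩

lemma lt_of_notMem (hy : IsBeyondOnly K F y) (hK : IsPolytope K) (hint : (interior K).Nonempty)
    (hl0 : l ≠ 0) (hl : ∀ x ∈ K, l x ≤ M) (hx : x ∈ K) (hxM : l x = M) (hxF : x ∉ F) :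
    l y < M := by
  obtain ⟨p, hp, hpK⟩ := hy.exists_mem_openSegment_mem_interior hK hint hx hxF
  by_contra! hyM
  exact (lt_of_mem_interior hl hl0 hpK).not_ge (le_of_mem_openSegment hxM.ge hyM hp)

lemma ssubset (hy : IsBeyondOnly K F y) : F ⊂ K :=
  hy.isFacetOf.1.subset.ssubset_of_ne hy.isFacetOf.mem_properFaces.2.2

-- Rotate the supporting hyperplane about `G`. At the critical slope `s₀` it touches `K` outside
-- `F`, hence `y` lies strictly below it; raising the slope, it meets `K` in `G` alone throughout,
-- and at some larger slope it passes through `y`.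
lemma exists_eq_sep_of_mem_properFaces_facet (hy : IsBeyondOnly K F y) (hK : IsPolytope K)
    (hint : (interior K).Nonempty) (hG : G ∈ properFaces F) :
    (∃ (l : StrongDual ℝ (EuclideanSpace ℝ (Fin N))) (M : ℝ),
        (∀ x ∈ K, l x ≤ M) ∧ {x ∈ K | l x = M} = G ∧ l y < M) ∧
      ∃ (l : StrongDual ℝ (EuclideanSpace ℝ (Fin N))) (M : ℝ),
        (∀ x ∈ K, l x ≤ M) ∧ {x ∈ K | l x = M} = G ∧ l y = M := by
  obtain ⟨v, c, hv, rfl, hvy⟩ := hy.exists_eq_sep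
  obtain ⟨hGexp, hGne, hGF⟩ := hG
  obtain ⟨l, M, hl, rfl⟩ := exists_eq_sep_of_isExposed hGexp hGne
  obtain ⟨s₀, hs₀, p, hp, hpc, hpM⟩ := hK.exists_critical_slope hv
    (hy.isFacetOf.exists_lt hv) fun x hx hxc => hl x ⟨hx, hxc⟩
  have hl₀ : l + s₀ • v ≠ 0 := by
    intro h0
    obtain ⟨g, ⟨-, hgc⟩, hgM⟩ := hGne
    have hconst : ∀ x, l x = -(s₀ * v x) := fun x =>
      eq_neg_of_add_eq_zero_left (by simpa using DFunLike.congr_fun h0 x)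
    refine hGF (sep_eq_self_iff_mem_true.2 fun x hx => ?_)
    rw [← hgM, hconst, hconst, hx.2, hgc]
  have hlt : (l + s₀ • v) y < M + s₀ * c :=
    hy.lt_of_notMem hK hint hl₀ hs₀ hp hpM fun h => hpc.ne h.2
  simp only [add_apply, smul_apply, smul_eq_mul] at hlt
  have hpos : 0 < v y - c := sub_pos.2 hvy
  have hs₁ : s₀ < (M - l y) / (v y - c) := by
    rw [lt_div_iff₀ hpos]
    linarith
  obtain ⟨s, hs₀s, hss₁⟩ := exists_between hs₁
  refine ⟨⟨l + s • v, M + s * c, tilt_le hs₀s.le hv hs₀, sep_tilt_eq hs₀s hv hs₀, ?_⟩,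
    l + ((M - l y) / (v y - c)) • v, M + (M - l y) / (v y - c) * c,
    tilt_le hs₁.le hv hs₀, sep_tilt_eq hs₁ hv hs₀, ?_⟩
  · rw [lt_div_iff₀ hpos] at hss₁
    simp only [add_apply, smul_apply, smul_eq_mul]
    linarith
  · have := div_mul_cancel₀ (M - l y) hpos.ne'
    simp only [add_apply, smul_apply, smul_eq_mul]
    linarith

lemma exists_eq_sep_lt (hy : IsBeyondOnly K F y) (hK : IsPolytope K)
    (hint : (interior K).Nonempty) (hG : G ∈ properFaces K) (hGF : G ≠ F) :
    ∃ (l : StrongDual ℝ (EuclideanSpace ℝ (Fin N))) (M : ℝ),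
      (∀ x ∈ K, l x ≤ M) ∧ {x ∈ K | l x = M} = G ∧ l y < M := by
  by_cases hsub : G ⊆ F
  · have hexp : IsExposed ℝ F G :=
      inter_eq_right.2 hy.ssubset.subset ▸ hG.1.inter_left hsub
    exact (hy.exists_eq_sep_of_mem_properFaces_facet hK hint ⟨hexp, hG.2.1, hGF⟩).1
  · obtain ⟨x, hxG, hxF⟩ := not_subset.1 hsub
    obtain ⟨l, M, hl0, hl, rfl⟩ := exists_eq_sep_of_mem_properFaces hG
    exact ⟨l, M, hl, rfl, hy.lt_of_notMem hK hint hl0 hl hxG.1 hxG.2 hxF⟩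

end IsBeyondOnly

end Facets

/-! ### The face lattice after adding an apex -/

section Apex

variable {N : ℕ} {K F G : Set (EuclideanSpace ℝ (Fin N))}
  {l : StrongDual ℝ (EuclideanSpace ℝ (Fin N))} {M : ℝ} {y z : EuclideanSpace ℝ (Fin N)}

namespace IsBeyondOnly

lemma mem_properFaces_or_mem_pyramids (hy : IsBeyondOnly K F y) (hK : IsPolytope K)
    (hint : (interior K).Nonempty) (hG : G ∈ properFaces (convexHull ℝ (insert y K))) :
    G ∈ properFaces K \ {F} ∨ G ∈ pyramids F y := by
  obtain ⟨l, M, hl0, hlQ, rfl⟩ := exists_eq_sep_of_mem_properFaces hG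
  have hyM : l y ≤ M := hlQ y (subset_convexHull ℝ _ (mem_insert y K))
  have hl : ∀ x ∈ K, l x ≤ M := fun x hx =>
    hlQ x (subset_convexHull ℝ _ (mem_insert_of_mem y hx))
  have hF : {x ∈ K | l x = M} ≠ F := fun h => (hy.lt_of_eq l M hl h).not_ge hyM
  rcases hyM.lt_or_eq with hlt | heq
  · rw [sep_convexHull_insert_of_lt hK.convex hl hlt] at hG ⊢
    exact Or.inl ⟨sep_mem_properFaces hint hl0 hl hG.2.1, hF⟩
  · rw [sep_convexHull_insert_of_eq hl heq]
    have hsub : {x ∈ K | l x = M} ⊆ F := fun x hx => by_contra fun hxF =>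
      (hy.lt_of_notMem hK hint hl0 hl hx.1 hx.2 hxF).ne heq
    exact Or.inr ⟨_, ⟨inter_eq_right.2 hy.ssubset.subset ▸ (isExposed_sep hl).inter_left hsub, hF⟩,
      rfl⟩

lemma mem_properFaces_convexHull_insert (hy : IsBeyondOnly K F y) (hK : IsPolytope K)
    (hint : (interior K).Nonempty) (hG : G ∈ properFaces K) (hGF : G ≠ F) :
    G ∈ properFaces (convexHull ℝ (insert y K)) := by
  obtain ⟨l, M, hl, rfl, hlt⟩ := hy.exists_eq_sep_lt hK hint hG hGF
  rw [← sep_convexHull_insert_of_lt hK.convex hl hlt]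
  refine sep_mem_properFaces (interior_convexHull_insert_nonempty hint y)
    (ne_zero_of_sep_mem_properFaces hG)
    (fun x => le_of_mem_convexHull (forall_mem_insert.2 ⟨hlt.le, hl⟩)) ?_
  rw [sep_convexHull_insert_of_lt hK.convex hl hlt]
  exact hG.2.1

lemma exists_pyramid_eq_sep (hy : IsBeyondOnly K F y) (hK : IsPolytope K)
    (hint : (interior K).Nonempty) (hG : IsExposed ℝ F G) (hGF : G ≠ F) :
    ∃ l : StrongDual ℝ (EuclideanSpace ℝ (Fin N)),
      l ≠ 0 ∧ (∀ x ∈ K, l x ≤ l y) ∧ {x ∈ K | l x = l y} = G := by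
  obtain ⟨v, c, hv, hvF, hvy⟩ := hy.exists_eq_sep
  rcases eq_empty_or_nonempty G with rfl | hne
  · have hlt : ∀ x ∈ K, v x < v y := fun x hx => (hv x hx).trans_lt hvy
    refine ⟨v, ?_, fun x hx => (hlt x hx).le, sep_eq_empty_iff_mem_false.2 fun x hx =>
      (hlt x hx).ne⟩
    exact ne_zero_of_sep_mem_properFaces (hvF ▸ hy.isFacetOf.mem_properFaces)
  · obtain ⟨l, M, hl, rfl, rfl⟩ :=
      (hy.exists_eq_sep_of_mem_properFaces_facet hK hint ⟨hG, hne, hGF⟩).2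
    refine ⟨l, ne_zero_of_sep_mem_properFaces ⟨isExposed_sep hl, hne, ?_⟩, hl, rfl⟩
    exact (hG.subset.trans_ssubset hy.ssubset).ne

lemma mem_properFaces_of_mem_pyramids (hy : IsBeyondOnly K F y) (hK : IsPolytope K)
    (hint : (interior K).Nonempty) (hG : G ∈ pyramids F y) :
    G ∈ properFaces (convexHull ℝ (insert y K)) := by
  obtain ⟨G, ⟨hGF, hne⟩, rfl⟩ := hG
  obtain ⟨l, hl0, hl, rfl⟩ := hy.exists_pyramid_eq_sep hK hint hGF hne
  simp only [← sep_convexHull_insert_of_eq hl rfl]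
  exact sep_mem_properFaces (interior_convexHull_insert_nonempty hint y) hl0
    (fun x => le_of_mem_convexHull (forall_mem_insert.2 ⟨le_rfl, hl⟩))
    ⟨y, subset_convexHull ℝ _ (mem_insert y K), rfl⟩

theorem properFaces_convexHull_insert (hy : IsBeyondOnly K F y) (hK : IsPolytope K)
    (hint : (interior K).Nonempty) :
    properFaces (convexHull ℝ (insert y K)) = properFaces K \ {F} ∪ pyramids F y := by
  refine Subset.antisymm (fun G hG => hy.mem_properFaces_or_mem_pyramids hK hint hG) ?_
  rintro G (⟨hG, hGF⟩ | hG)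
  · exact hy.mem_properFaces_convexHull_insert hK hint hG hGF
  · exact hy.mem_properFaces_of_mem_pyramids hK hint hG

end IsBeyondOnly

lemma pyramids_adim_zero (hne : F.Nonempty) (hF : ∀ x ∈ F, l x = M) (hy : M < l y) :
    {P ∈ pyramids F y | adim P = 0} = {{y}} := by
  refine Subset.antisymm ?_ (singleton_subset_iff.2 ⟨⟨∅, ?_, ?_⟩, adim_singleton y⟩)
  · rintro _ ⟨⟨G, ⟨hG, -⟩, rfl⟩, hdim⟩
    rcases eq_empty_or_nonempty G with rfl | hGne
    · simp
    · rw [adim_pyramid hGne (fun x hx => hF x (hG.subset hx)) hy.ne'] at hdim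
      exact absurd hdim (Nat.succ_ne_zero _)
  · exact ⟨isExposed_empty, hne.ne_empty.symm⟩
  · simp

lemma pyramids_adim_succ (hF : ∀ x ∈ F, l x = M) (hy : M < l y) (k : ℕ) :
    {P ∈ pyramids F y | adim P = k + 1} =
      (fun G => convexHull ℝ (insert y G)) '' {G ∈ properFaces F | adim G = k} := by
  have hdim : ∀ G ⊆ F, G.Nonempty → adim (convexHull ℝ (insert y G)) = adim G + 1 :=
    fun G hG hne => adim_pyramid hne (fun x hx => hF x (hG hx)) hy.ne'
  refine Subset.antisymm ?_ ?_
  · rintro _ ⟨⟨G, ⟨hG, hGF⟩, rfl⟩, hk⟩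
    have hne : G.Nonempty := by
      rw [nonempty_iff_ne_empty]
      rintro rfl
      simp [adim_singleton] at hk
    exact ⟨G, ⟨⟨hG, hne, hGF⟩, Nat.succ_injective ((hdim G hG.subset hne).symm.trans hk)⟩, rfl⟩
  · rintro _ ⟨G, ⟨⟨hG, hne, hGF⟩, rfl⟩, rfl⟩
    exact ⟨⟨G, ⟨hG, hGF⟩, rfl⟩, hdim G hG.subset hne⟩

lemma ncard_pyramids_adim (hconv : Convex ℝ F) (hne : F.Nonempty) (hF : ∀ x ∈ F, l x = M)
    (hy : M < l y) (k : ℕ) :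
    {P ∈ pyramids F y | adim P = k}.ncard = if k = 0 then 1 else bCount F (k - 1) := by
  rcases k with _ | k
  · rw [pyramids_adim_zero hne hF hy, ncard_singleton, if_pos rfl]
  rw [pyramids_adim_succ hF hy, if_neg k.succ_ne_zero, Nat.add_sub_cancel, bCount_eq_ncard]
  refine InjOn.ncard_image fun G hG G' hG' heq => ?_
  have hbase : ∀ G ∈ {G ∈ properFaces F | adim G = k},
      {x ∈ convexHull ℝ (insert y G) | l x = M} = G := fun G hG =>
    sep_pyramid_eq_base (hG.1.1.convex hconv) (fun x hx => hF x (hG.1.1.subset hx)) hy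
  rw [← hbase G hG, ← hbase G' hG']
  exact congrArg (fun P => {x ∈ P | l x = M}) heq

namespace IsBeyondOnly

theorem bCount_convexHull_insert (hy : IsBeyondOnly K F y) (hK : IsPolytope K)
    (hint : (interior K).Nonempty) (k : ℕ) :
    bCount (convexHull ℝ (insert y K)) k + (if k + 1 = N then 1 else 0) =
      bCount K k + if k = 0 then 1 else bCount F (k - 1) := by
  have hfin : {G ∈ properFaces K | adim G = k}.Finite :=
    hK.finite_properFaces.subset (sep_subset _ _)
  have hfinQ : {P ∈ pyramids F y | adim P = k}.Finite :=
    (hK.convexHull_insert y).finite_properFaces.subset fun P hP =>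
      hy.mem_properFaces_of_mem_pyramids hK hint hP.1
  have hsplit : {G ∈ properFaces (convexHull ℝ (insert y K)) | adim G = k} =
      ({G ∈ properFaces K | adim G = k} \ {F}) ∪ {P ∈ pyramids F y | adim P = k} := by
    rw [hy.properFaces_convexHull_insert hK hint]
    ext G
    simp only [mem_union, mem_ofPred_eq, mem_sdiff, mem_singleton_iff]
    tauto
  have hdisj : Disjoint ({G ∈ properFaces K | adim G = k} \ {F})
      {P ∈ pyramids F y | adim P = k} := disjoint_left.2 fun P hP hP' =>
    hy.notMem (hP.1.1.1.subset (apex_mem_of_mem_pyramids hP'.1))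
  have hdiff : ({G ∈ properFaces K | adim G = k} \ {F}).ncard + (if k + 1 = N then 1 else 0) =
      bCount K k := by
    obtain ⟨hF, hFdim⟩ := (isFacetOf_iff hint).1 hy.isFacetOf
    rw [bCount_eq_ncard]
    split_ifs with hk
    · exact ncard_sdiff_singleton_add_one ⟨hF, by omega⟩ hfin
    · have hFk : F ∉ {G ∈ properFaces K | adim G = k} := fun h => hk (h.2 ▸ hFdim)
      rw [sdiff_singleton_eq_self hFk, add_zero]
  obtain ⟨v, c, -, rfl, hvy⟩ := hy.exists_eq_sep
  have hconv := hy.isFacetOf.1.convex hK.convex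
  rw [bCount_eq_ncard (convexHull ℝ _), hsplit, ncard_union_eq hdisj hfin.sdiff hfinQ,
    ncard_pyramids_adim hconv hy.isFacetOf.2.1 (fun x hx => hx.2) hvy, ← hdiff]
  exact add_right_comm _ _ _

lemma lt_of_isFacetOf_convexHull_insert (hN : 2 ≤ N) (hK : IsPolytope K)
    (hint : (interior K).Nonempty) (hFG : Disjoint F G) (hy : IsBeyondOnly K F y)
    (hz : IsBeyondOnly K G z) (hl : ∀ x ∈ convexHull ℝ (insert y K), l x ≤ M)
    (hP : IsFacetOf (convexHull ℝ (insert y K)) {x ∈ convexHull ℝ (insert y K) | l x = M})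
    (hPG : {x ∈ convexHull ℝ (insert y K) | l x = M} ≠ G) : l z < M := by
  have hlK : ∀ x ∈ K, l x ≤ M := fun x hx =>
    hl x (subset_convexHull ℝ _ (mem_insert_of_mem y hx))
  have hl0 : l ≠ 0 := ne_zero_of_sep_mem_properFaces hP.mem_properFaces
  have hyM : l y ≤ M := hl y (subset_convexHull ℝ _ (mem_insert y K))
  obtain ⟨hPmem, hPdim⟩ := (isFacetOf_iff (interior_convexHull_insert_nonempty hint y)).1 hP
  rcases hyM.lt_or_eq with hlt | heq
  · rw [sep_convexHull_insert_of_lt hK.convex hlK hlt] at hPmem hPdim hPG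
    refine hz.lt_of_ne l M hlK ((isFacetOf_iff hint).2 ⟨?_, hPdim⟩) hPG
    exact sep_mem_properFaces hint hl0 hlK hPmem.2.1
  · have hne : {x ∈ K | l x = M}.Nonempty := by
      rw [nonempty_iff_ne_empty]
      intro hempty
      rw [sep_convexHull_insert_of_eq hlK heq, hempty, insert_empty_eq, convexHull_singleton,
        adim_singleton] at hPdim
      omega
    obtain ⟨x, hx, hxM⟩ := hne
    have hxF : x ∈ F := by_contra fun hxF =>
      (hy.lt_of_notMem hK hint hl0 hlK hx hxM hxF).ne heq
    exact hz.lt_of_notMem hK hint hl0 hlK hx hxM (disjoint_left.1 hFG hxF)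

theorem convexHull_insert (hN : 2 ≤ N) (hK : IsPolytope K) (hint : (interior K).Nonempty)
    (hFG : Disjoint F G) (hy : IsBeyondOnly K F y) (hz : IsBeyondOnly K G z) :
    IsBeyondOnly (convexHull ℝ (insert y K)) G z where
  isFacetOf := by
    obtain ⟨hG, hdim⟩ := (isFacetOf_iff hint).1 hz.isFacetOf
    have hGF : G ≠ F := by
      rintro rfl
      exact hG.2.1.ne_empty (disjoint_self.1 hFG)
    exact (isFacetOf_iff (interior_convexHull_insert_nonempty hint y)).2
      ⟨hy.mem_properFaces_convexHull_insert hK hint hG hGF, hdim⟩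
  lt_of_eq l M hl hG := by
    have hKQ : K ⊆ convexHull ℝ (insert y K) :=
      (subset_insert y K).trans (subset_convexHull ℝ _)
    refine hz.lt_of_eq l M (fun x hx => hl x (hKQ hx)) (Subset.antisymm ?_ fun x hx => ?_)
    · exact fun x hx => hG.subset ⟨hKQ hx.1, hx.2⟩
    · exact ⟨hz.ssubset.subset hx, (hG.superset hx).2⟩
  lt_of_ne l M hl hP hPG := lt_of_isFacetOf_convexHull_insert hN hK hint hFG hy hz hl hP hPG

end IsBeyondOnly

end Apex

section Levels

variable {N : ℕ} {K A : Set (EuclideanSpace ℝ (Fin N))}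
  {v : StrongDual ℝ (EuclideanSpace ℝ (Fin N))} {b : ℝ}

lemma adim_eq_of_level (hAK : A ⊆ K) (hA : A.Nonempty) (hdim : adim A + 1 = N)
    (hvA : ∀ x ∈ A, v x = b) (hne : ∃ x ∈ K, v x ≠ b) : adim K = N := by
  obtain ⟨x, hx, hxb⟩ := hne
  have hle : adim K ≤ N := adim_le K
  have hlt : adim A < adim K := (adim_lt_adim_insert hA hvA hxb).trans_le
    (adim_mono (insert_subset hx hAK))
  omega

lemma isFacetOf_level (hAK : A ⊆ K) (hA : A.Nonempty) (hdim : adim A + 1 = N)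
    (hvA : ∀ x ∈ A, v x = b) (hvK : ∀ x ∈ K, v x ≤ b) (hlt : ∃ x ∈ K, v x < b) :
    IsFacetOf K {x ∈ K | v x = b} := by
  have hsub : A ⊆ {x ∈ K | v x = b} := fun x hx => ⟨hAK hx, hvA x hx⟩
  obtain ⟨q, hq, hqb⟩ := hlt
  have hv0 : v ≠ 0 := by
    rintro rfl
    obtain ⟨a, ha⟩ := hA
    exact hqb.ne (hvA a ha)
  have hK : adim K = N := adim_eq_of_level hAK hA hdim hvA ⟨q, hq, hqb.ne⟩
  have hle : adim A ≤ adim {x ∈ K | v x = b} := adim_mono hsub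
  have hlt : adim {x ∈ K | v x = b} < N := adim_lt hv0 fun x hx => hx.2
  exact ⟨isExposed_sep hvK, hA.mono hsub, by omega⟩

variable {ι : Type*} {P : ι → Set (EuclideanSpace ℝ (Fin N))} {t : ι → ℝ} {i j : ι}
  {u : EuclideanSpace ℝ (Fin N)}

lemma disjoint_inter_level {a b : ℝ} (hab : a ≠ b) :
    Disjoint (K ∩ {x | ⟪x, u⟫ = a}) (K ∩ {x | ⟪x, u⟫ = b}) :=
  disjoint_left.2 fun _ hx hx' => hab (hx.2.symm.trans hx'.2)

lemma adim_convexHull_iUnion (hne : ∀ k, (P k).Nonempty) (hP : ∀ k, P k ⊆ {x | ⟪x, u⟫ = t k})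
    (hij : t i ≠ t j) (hdim : adim (P j) + 1 = N) : adim (convexHull ℝ (⋃ k, P k)) = N := by
  obtain ⟨x, hx⟩ := hne i
  refine adim_eq_of_level (v := innerSL ℝ u) (subset_convexHull_iUnion P j) (hne j) hdim
    (fun y hy => (real_inner_comm y u).trans (hP j hy))
    ⟨x, subset_convexHull_iUnion P i hx, ?_⟩
  exact ((real_inner_comm x u).trans (hP i hx)).trans_ne hij

lemma isFacetOf_top_level (hne : ∀ k, (P k).Nonempty) (hP : ∀ k, P k ⊆ {x | ⟪x, u⟫ = t k})
    (htop : ∀ k, t k ≤ t j) (hij : t i < t j) (hdim : adim (P j) + 1 = N) :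
    IsFacetOf (convexHull ℝ (⋃ k, P k)) (convexHull ℝ (⋃ k, P k) ∩ {x | ⟪x, u⟫ = t j}) := by
  have hv : ∀ k, ∀ x ∈ P k, innerSL ℝ u x = t k := fun k x hx =>
    (real_inner_comm x u).trans (hP k hx)
  obtain ⟨x, hx⟩ := hne i
  have hfacet := isFacetOf_level (subset_convexHull_iUnion P j) (hne j) hdim (hv j)
    (fun y => le_of_mem_convexHull fun p hp => by
      obtain ⟨k, hk⟩ := mem_iUnion.1 hp
      exact (hv k p hk).trans_le (htop k))
    ⟨x, subset_convexHull_iUnion P i hx, (hv i x hx).trans_lt hij⟩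
  simpa only [innerSL_apply_apply, real_inner_comm u, inter_ofPred_eq_sep] using hfacet

lemma isFacetOf_bottom_level (hne : ∀ k, (P k).Nonempty) (hP : ∀ k, P k ⊆ {x | ⟪x, u⟫ = t k})
    (hbot : ∀ k, t i ≤ t k) (hij : t i < t j) (hdim : adim (P i) + 1 = N) :
    IsFacetOf (convexHull ℝ (⋃ k, P k)) (convexHull ℝ (⋃ k, P k) ∩ {x | ⟪x, u⟫ = t i}) := by
  have hfacet := isFacetOf_top_level (u := -u) (t := -t) hne
    (fun k x hx => (inner_neg_right x u).trans (neg_inj.2 (hP k hx)))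
    (fun k => neg_le_neg (hbot k)) (neg_lt_neg hij) hdim
  simpa only [inner_neg_right, Pi.neg_apply, neg_inj] using hfacet

end Levels

theorem stmt8_general {N : ℕ} (hN : 2 ≤ N) {K F G : Set (EuclideanSpace ℝ (Fin N))}
    (hK : IsPolytope K) (hdim : adim K = N) (hFG : Disjoint F G) (hF : IsFacetOf K F)
    (hG : IsFacetOf K G) {y z : EuclideanSpace ℝ (Fin N)}
    (hyF : IsBeyond K F y) (hy : ∀ H, IsFacetOf K H → H ≠ F → IsBeneath K H y)
    (hzG : IsBeyond K G z) (hz : ∀ H, IsFacetOf K H → H ≠ G → IsBeneath K H z)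
    {k : ℕ} (hk : k < N) :
    fCount (convexHull ℝ (K ∪ {y, z})) k + (if k + 1 = N then 2 else 0) =
      fCount K k + (if k = 0 then 1 else bCount F (k - 1)) +
        (if k = 0 then 1 else bCount G (k - 1)) := by
  have hint : (interior K).Nonempty :=
    interior_nonempty_of_adim_eq hK.convex (hF.2.1.mono hF.1.subset) hdim
  have hintQ := interior_convexHull_insert_nonempty hint y
  have hyF := IsBeyondOnly.of_isBeyond hF hyF hy
  have hzG := IsBeyondOnly.of_isBeyond hG hzG hz
  have hQ : convexHull ℝ (K ∪ {y, z}) =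
      convexHull ℝ (insert z (convexHull ℝ (insert y K))) := by
    rw [insert_eq z, convexHull_convexHull_union_right, ← insert_eq, insert_comm,
      union_comm, insert_union, singleton_union]
  have hdimQ := adim_eq_of_interior_nonempty (interior_convexHull_insert_nonempty hintQ z)
  have hcountF := hyF.bCount_convexHull_insert hK hint k
  have hzQ := IsBeyondOnly.convexHull_insert hN hK hint hFG hyF hzG
  have hcountG := hzQ.bCount_convexHull_insert (hK.convexHull_insert y) hintQ k
  rw [hQ, fCount_eq_bCount (hk.trans_eq hdimQ.symm).ne',
    fCount_eq_bCount (hk.trans_eq hdim.symm).ne']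
  split_ifs at * <;> omega

theorem stmt8 (d m : ℕ) (hd : 2 ≤ d) (hm : 2 ≤ m)
    (u : EuclideanSpace ℝ (Fin (d + 1))) (hu : ‖u‖ = 1)
    (t : Fin m → ℝ) (ht : StrictMono t)
    (P : Fin m → Set (EuclideanSpace ℝ (Fin (d + 1))))
    (hfin : ∀ i, (P i).Finite)
    (hsub : ∀ i, P i ⊆ {x | ⟪x, u⟫ = t i})
    (hdim : ∀ i, adim (convexHull ℝ (P i)) = d)
    (KP KP1 KPm Q : Set (EuclideanSpace ℝ (Fin (d + 1))))
    (hKP : KP = convexHull ℝ (⋃ i, P i))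
    (hKP1 : KP1 = KP ∩ {x | ⟪x, u⟫ = t ⟨0, by omega⟩})
    (hKPm : KPm = KP ∩ {x | ⟪x, u⟫ = t ⟨m - 1, by omega⟩})
    (y z : EuclideanSpace ℝ (Fin (d + 1)))
    (hy₁ : IsBeyond KP KP1 y)
    (hy₂ : ∀ F, IsFacetOf KP F → F ≠ KP1 → IsBeneath KP F y)
    (hz₁ : IsBeyond KP KPm z)
    (hz₂ : ∀ F, IsFacetOf KP F → F ≠ KPm → IsBeneath KP F z)
    (hQ : Q = convexHull ℝ ((⋃ i, P i) ∪ {y, z})) :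
    ∀ k ≤ d,
      fCount Q k + (if k = d then 2 else 0) =
        fCount KP k + (if k = 0 then 1 else bCount KP1 (k - 1)) +
          (if k = 0 then 1 else bCount KPm (k - 1)) := by
  subst hKP hKP1 hKPm hQ
  have hdim' : ∀ i, adim (P i) = d := fun i => (adim_convexHull _).symm.trans (hdim i)
  have hne : ∀ i, (P i).Nonempty := fun i =>
    nonempty_of_adim_pos ((zero_lt_two.trans_le hd).trans_eq (hdim' i).symm)
  have hcodim : ∀ i, adim (P i) + 1 = d + 1 := fun i => congrArg (· + 1) (hdim' i)
  have hlt : t ⟨0, by omega⟩ < t ⟨m - 1, by omega⟩ := ht (Fin.mk_lt_mk.2 (by omega))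
  have hbot := isFacetOf_bottom_level hne hsub (fun i => ht.monotone (Nat.zero_le _)) hlt
    (hcodim _)
  have htop := isFacetOf_top_level hne hsub (fun i => ht.monotone (Nat.le_pred_of_lt i.2)) hlt
    (hcodim _)
  intro k hk
  have h := stmt8_general (by omega) ⟨_, finite_iUnion hfin, rfl⟩
    (adim_convexHull_iUnion hne hsub hlt.ne (hcodim _)) (disjoint_inter_level hlt.ne) hbot htop
    hy₁ hy₂ hz₁ hz₂ (Nat.lt_succ_of_le hk)
  simpa only [convexHull_convexHull_union_left, Nat.add_right_cancel_iff] using h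
end

section
/- Let c_1, …, c_n be points in E^d and r_1, …, r_n ≥ 0. For each k let σ_k be the closed ball in E^d with center c_k and radius r_k, let p_k = (c_k, r_k) ∈ E^d × ℝ, let λ_0 = {(x, t) ∈ E^d × ℝ : t ≤ 0 and ‖x‖ ≤ −t} (the lower half-cone with apex at the origin, vertical axis, and half-angle π/4), and let λ(p_k) = p_k + λ_0. Then: (1) conv(λ(p_1) ∪ … ∪ λ(p_n)) = conv({p_1, …, p_n}) + λ_0 (Minkowski sum); and (2) (conv({p_1, …, p_n}) + λ_0) ∩ (E^d × {0}) = conv(σ_1 ∪ … ∪ σ_n) × {0}, i.e., the convex hull of the balls is the slice of this Minkowski sum by the hyperplane {x_{d+1} = 0}. -/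
open Set Pointwise

/-!
Part (1) holds because taking convex hulls commutes with Minkowski sums and the half-cone is
convex. For part (2), encode the closed ball with center `y` and radius `s` as the point `(y, s)`.
The horizontal slice of `A + λ₀` is then the union of the balls encoded by `A`, so the claim is that
taking the union of the encoded balls commutes with convex hulls. This union is convex when `A` is,
being a slice of a convex set; and the balls contained in a fixed convex set form a convex set of
pairs `(y, s)` with `0 ≤ s`, because every point of the ball encoded by `a • (y, s) + b • (z, t)`
is of the form `a • u + b • v` with `u`, `v` in the balls encoded by `(y, s)` and `(z, t)`.
-/

theorem convexHull_iUnion_singleton_add {R V ι : Type*} [Field R] [LinearOrder R]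
    [IsStrictOrderedRing R] [AddCommGroup V] [Module R V] (p : ι → V) {K : Set V}
    (hK : Convex R K) :
    convexHull R (⋃ i, ({p i} + K)) = convexHull R (range p) + K := by
  rw [← iUnion_add, iUnion_singleton_eq_range, convexHull_add, hK.convexHull_eq]

section LowerCone

open Metric

variable {E : Type*} [SeminormedAddCommGroup E]

variable (E) in
/-- The lower half-cone `λ₀` in `E × ℝ` with apex at the origin, vertical axis and half-angle `π/4`.
Its translate `p + λ₀` with `p = (y, s)`, `0 ≤ s`, meets the plane at height `0` in the closed ball
with center `y` and radius `s`. -/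
def lowerCone : Set (E × ℝ) :=
  {q | q.2 ≤ 0 ∧ ‖q.1‖ ≤ -q.2}

theorem mem_lowerCone_iff {q : E × ℝ} : q ∈ lowerCone E ↔ q.2 ≤ -‖q.1‖ :=
  ⟨fun h => le_neg.2 h.2, fun h => ⟨h.trans (neg_nonpos.2 (norm_nonneg _)), le_neg.1 h⟩⟩

theorem mk_zero_mem_add_lowerCone_iff {A : Set (E × ℝ)} {x : E} :
    (x, (0 : ℝ)) ∈ A + lowerCone E ↔ x ∈ ⋃ q ∈ A, closedBall q.1 q.2 := by
  simp only [mem_iUnion₂, exists_prop, mem_closedBall_iff_norm]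
  constructor
  · rintro ⟨q, hq, v, hv, hqv⟩
    obtain ⟨rfl, hheight⟩ := Prod.ext_iff.1 hqv
    rw [mem_lowerCone_iff] at hv
    refine ⟨q, hq, ?_⟩
    simp only [Prod.fst_add, Prod.snd_add, add_sub_cancel_left] at hheight ⊢
    linarith
  · rintro ⟨q, hq, hx⟩
    refine ⟨q, hq, (x - q.1, -q.2), mem_lowerCone_iff.2 (neg_le_neg hx), ?_⟩
    simp [Prod.ext_iff]

theorem add_lowerCone_inter_snd_eq_zero (A : Set (E × ℝ)) :
    (A + lowerCone E) ∩ {q | q.2 = 0} =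
      (⋃ q ∈ A, closedBall q.1 q.2) ×ˢ ({0} : Set ℝ) := by
  ext ⟨x, t⟩
  simp only [mem_inter_iff, mem_prod, mem_singleton_iff, ← mk_zero_mem_add_lowerCone_iff]
  exact and_congr_left fun ht : t = 0 => by rw [ht]

variable [NormedSpace ℝ E]

theorem convex_lowerCone : Convex ℝ (lowerCone E) := by
  have hypograph_eq : {q : E × ℝ | q.1 ∈ univ ∧ q.2 ≤ -‖q.1‖} = lowerCone E :=
    ext fun q => (and_iff_right (mem_univ q.1)).trans mem_lowerCone_iff.symm
  exact hypograph_eq ▸ (convexOn_univ_norm (E := E)).neg.convex_hypograph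

theorem convex_biUnion_closedBall {A : Set (E × ℝ)} (hA : Convex ℝ A) :
    Convex ℝ (⋃ q ∈ A, closedBall q.1 q.2) := by
  have hslice := (hA.add convex_lowerCone).linear_preimage (LinearMap.inl ℝ E ℝ)
  convert hslice using 1
  ext x
  exact mk_zero_mem_add_lowerCone_iff.symm

theorem closedBall_add_subset_closedBall_add_closedBall {s t : ℝ} (hs : 0 ≤ s) (ht : 0 ≤ t)
    (y z : E) :
    closedBall (y + z) (s + t) ⊆ closedBall y s + closedBall z t := by
  intro x hx
  have hdist : dist (x - z) y ≤ s + t := by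
    rwa [dist_eq_norm, sub_sub, add_comm z, ← dist_eq_norm]
  obtain ⟨w, hxw, hwy⟩ := exists_dist_le_le ht hs hdist
  refine ⟨w, hwy, x - w, ?_, add_sub_cancel w x⟩
  rwa [mem_closedBall_iff_norm, sub_right_comm, ← dist_eq_norm]

-- A ball of negative radius is empty, so the inclusion alone does not cut out a convex set.
theorem convex_setOf_closedBall_subset {C : Set E} (hC : Convex ℝ C) :
    Convex ℝ {q : E × ℝ | 0 ≤ q.2 ∧ closedBall q.1 q.2 ⊆ C} := by
  refine convex_iff_forall_pos.2 ?_
  rintro ⟨y, s⟩ ⟨hs, hyC⟩ ⟨z, t⟩ ⟨ht, hzC⟩ a b ha hb hab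
  have has : 0 ≤ a * s := mul_nonneg ha.le hs
  have hbt : 0 ≤ b * t := mul_nonneg hb.le ht
  refine ⟨add_nonneg has hbt, ?_⟩
  calc closedBall (a • y + b • z) (a * s + b * t)
      ⊆ closedBall (a • y) (a * s) + closedBall (b • z) (b * t) :=
        closedBall_add_subset_closedBall_add_closedBall has hbt _ _
    _ = a • closedBall y s + b • closedBall z t := by
        rw [smul_closedBall' ha.ne', smul_closedBall' hb.ne', Real.norm_of_nonneg ha.le,
          Real.norm_of_nonneg hb.le]
    _ ⊆ a • C + b • C := add_subset_add (smul_set_mono hyC) (smul_set_mono hzC)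
    _ ⊆ C := convex_iff_pointwise_add_subset.1 hC ha.le hb.le hab

theorem biUnion_convexHull_closedBall {P : Set (E × ℝ)} (hP : ∀ q ∈ P, 0 ≤ q.2) :
    ⋃ q ∈ convexHull ℝ P, closedBall q.1 q.2 =
      convexHull ℝ (⋃ q ∈ P, closedBall q.1 q.2) := by
  apply Subset.antisymm
  · have hsub : P ⊆ {q | 0 ≤ q.2 ∧
        closedBall q.1 q.2 ⊆ convexHull ℝ (⋃ q ∈ P, closedBall q.1 q.2)} :=
      fun q hq => ⟨hP q hq, fun x hx => subset_convexHull ℝ _ (mem_biUnion hq hx)⟩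
    exact iUnion₂_subset fun q hq =>
      (convexHull_min hsub (convex_setOf_closedBall_subset (convex_convexHull ℝ _)) hq).2
  · exact convexHull_min (biUnion_mono (subset_convexHull ℝ P) fun _ _ => Subset.rfl)
      (convex_biUnion_closedBall (convex_convexHull ℝ P))

theorem stmt10_general {ι : Type*} (c : ι → E) (r : ι → ℝ) (hr : ∀ k, 0 ≤ r k) :
    convexHull ℝ (⋃ k, ({(c k, r k)} + lowerCone E)) =
      convexHull ℝ (range fun k => (c k, r k)) + lowerCone E ∧
    (convexHull ℝ (range fun k => (c k, r k)) + lowerCone E) ∩ {q | q.2 = 0} =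
      (convexHull ℝ (⋃ k, closedBall (c k) (r k))) ×ˢ ({0} : Set ℝ) := by
  refine ⟨convexHull_iUnion_singleton_add _ convex_lowerCone, ?_⟩
  rw [add_lowerCone_inter_snd_eq_zero, biUnion_convexHull_closedBall (forall_mem_range.2 hr),
    biUnion_range]

end LowerCone

theorem stmt10 (d n : ℕ) (c : Fin n → EuclideanSpace ℝ (Fin d)) (r : Fin n → ℝ)
    (hr : ∀ k, 0 ≤ r k) :
    -- (1) the convex hull of the half-cones is the Minkowski sum of the convex hull of the
    -- apices with the half-cone at the origin
    convexHull ℝ (⋃ k, ({((c k, r k) : EuclideanSpace ℝ (Fin d) × ℝ)} +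
        {q : EuclideanSpace ℝ (Fin d) × ℝ | q.2 ≤ 0 ∧ ‖q.1‖ ≤ -q.2})) =
      convexHull ℝ (Set.range fun k => ((c k, r k) : EuclideanSpace ℝ (Fin d) × ℝ)) +
        {q : EuclideanSpace ℝ (Fin d) × ℝ | q.2 ≤ 0 ∧ ‖q.1‖ ≤ -q.2} ∧
    -- (2) the slice of this Minkowski sum by the hyperplane {x_{d+1} = 0} is the convex hull
    -- of the balls
    (convexHull ℝ (Set.range fun k => ((c k, r k) : EuclideanSpace ℝ (Fin d) × ℝ)) +
        {q : EuclideanSpace ℝ (Fin d) × ℝ | q.2 ≤ 0 ∧ ‖q.1‖ ≤ -q.2}) ∩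
      {q : EuclideanSpace ℝ (Fin d) × ℝ | q.2 = 0} =
      (convexHull ℝ (⋃ k, Metric.closedBall (c k) (r k))) ×ˢ ({0} : Set ℝ) :=
  stmt10_general c r hr
end

section
/- Fix an odd integer d ≥ 3. There exists a constant c > 0, depending only on d, such that for any two d-dimensional polytopes 𝒫 = conv(V) and 𝒬 = conv(W) in E^d, where 𝒫 has n vertices and 𝒬 has m vertices, the total number of nonempty exposed faces of the Minkowski sum 𝒫 + 𝒬 is at most c · (n·m^{⌊d/2⌋} + m·n^{⌊d/2⌋}). (Upper bound half of the Minkowski-sum consequence of Theorem 2.6 stated in Section 7.) -/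
/-!
A face of `P + Q` exposed by a functional `u` is determined by the vertices of `P` and of `Q` at
which `u` is maximal. Normalize `u` to take the value `1` at some basis vector or its negative. Then
the points `(u, s, t)` such that `s` bounds `u` on the vertices of `P` and `t` bounds it on those of
`Q` form a polyhedron of dimension `d + 1` with one constraint per vertex, and each exposed face of
`P + Q` arises from the set of constraints that are tight at some point.

To count the tight sets, perturb the right-hand sides to make the polyhedron simple. Maximizing the
sum of the constraints in a tight set `Z` over the simple polyhedron yields a vertex, and `Z` can be
recovered from those of the `d + 1` constraints tight there that have a positive multiplier. So
there are at most `2 ^ (d + 1)` tight sets per vertex.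

The vertices of the simple polyhedron are counted as in Seidel's proof of the asymptotic upper bound
theorem. Fix a generic objective. A vertex is determined by the tight constraints whose relaxation
does not decrease the objective, and, up to the sign of the objective, there are at most `d / 2 + 1`
of these. An objective independent of `s` and `t` forces them to include a vertex of `P` and a
vertex of `Q`, which leaves only `n * m * (n + m) ^ (d / 2 - 1)` choices.
-/

open Set Pointwise

/-- The combinatorial complexity of `C`: the number of nonempty exposed faces of `C`. -/
noncomputable def totalFaces {N : ℕ} (C : Set (EuclideanSpace ℝ (Fin N))) : ℕ :=
  {F : Set (EuclideanSpace ℝ (Fin N)) | IsExposed ℝ C F ∧ F.Nonempty}.ncard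

open Module
open scoped Finset

section Polyhedra

variable {ι E : Type*} [AddCommGroup E] [Module ℝ E] {a : ι → E} {β γ : ι → ℝ} {φ φ' : Dual ℝ E}

/-- The point `φ` of the dual space lies in the polyhedron `{φ | φ (a i) ≤ γ i for all i}`. -/
def Feasible (a : ι → E) (γ : ι → ℝ) (φ : Dual ℝ E) : Prop := ∀ i, φ (a i) ≤ γ i

/-- `T` indexes a basis of `E` among the vectors `a i`. -/
structure IsBase (a : ι → E) (T : Finset ι) : Prop where
  linearIndepOn : LinearIndepOn ℝ a T
  span_eq_top : Submodule.span ℝ (a '' T) = ⊤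

namespace IsBase

variable {T : Finset ι}

/-- The basis of `E` formed by the vectors `a i` with `i ∈ T`. -/
noncomputable def basis (hT : IsBase a T) : Basis (T : Set ι) ℝ E :=
  .mk hT.linearIndepOn (by rw [← image_eq_range, hT.span_eq_top])

lemma card_eq_finrank (hT : IsBase a T) : T.card = finrank ℝ E := by
  simpa using (finrank_eq_card_basis hT.basis).symm

lemma dual_ext (hT : IsBase a T) (h : ∀ i ∈ T, φ (a i) = φ' (a i)) : φ = φ' :=
  LinearMap.ext_on hT.span_eq_top (by rintro _ ⟨i, hi, rfl⟩; exact h i hi)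

end IsBase

open Classical in
/-- The coordinate functional at `i` of the basis indexed by `T`. It is zero if `i ∉ T` or if `T`
does not index a basis, which keeps proofs out of its arguments. -/
noncomputable def baseCoord (a : ι → E) (T : Finset ι) (i : ι) : Dual ℝ E :=
  if h : IsBase a T ∧ i ∈ T then h.1.basis.coord ⟨i, h.2⟩ else 0

namespace IsBase

variable {T : Finset ι}

lemma baseCoord_self (hT : IsBase a T) {i : ι} (hi : i ∈ T) : baseCoord a T i (a i) = 1 := by
  have : a i = hT.basis ⟨i, hi⟩ := by simp [basis]
  rw [baseCoord, dif_pos ⟨hT, hi⟩, this, Basis.coord_apply, Basis.repr_self, Finsupp.single_eq_same]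

lemma baseCoord_of_ne (hT : IsBase a T) {i j : ι} (hj : j ∈ T) (hij : i ≠ j) :
    baseCoord a T i (a j) = 0 := by
  have : a j = hT.basis ⟨j, hj⟩ := by simp [basis]
  by_cases hi : i ∈ T
  · rw [baseCoord, dif_pos ⟨hT, hi⟩, this, Basis.coord_apply, Basis.repr_self,
      Finsupp.single_eq_of_ne (by simpa using hij)]
  · simp [baseCoord, hi]

lemma sum_baseCoord_mul (hT : IsBase a T) (φ : Dual ℝ E) (x : E) :
    ∑ i ∈ T, baseCoord a T i x * φ (a i) = φ x := by
  classical
  suffices h : ∑ i ∈ T, φ (a i) • baseCoord a T i = φ by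
    simpa [mul_comm] using LinearMap.congr_fun h x
  refine hT.dual_ext fun j hj => ?_
  rw [LinearMap.sum_apply, Finset.sum_eq_single_of_mem j hj fun i _ hij => by
    simp [hT.baseCoord_of_ne hj hij]]
  simp [hT.baseCoord_self hj]

end IsBase

lemma Feasible.map_sum_le (hφ : Feasible a γ φ) (S : Finset ι) :
    φ (∑ i ∈ S, a i) ≤ ∑ i ∈ S, γ i := by
  rw [map_sum]
  exact Finset.sum_le_sum fun i _ => hφ i

lemma exists_ascent_direction (hspan : Submodule.span ℝ (range a) = ⊤)
    {S : Finset ι} (hS : Submodule.span ℝ (a '' S) ≠ ⊤) (Z : Finset ι) :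
    ∃ r : Dual ℝ E, (∀ i ∈ S, r (a i) = 0) ∧ 0 ≤ r (∑ i ∈ Z, a i) ∧ ∃ i, 0 < r (a i) := by
  obtain ⟨r₀, hr₀, hker⟩ := Submodule.exists_le_ker_of_lt_top _ hS.lt_top
  have hr₀S : ∀ i ∈ S, r₀ (a i) = 0 := fun i hi => hker (Submodule.subset_span ⟨i, hi, rfl⟩)
  obtain ⟨r, hrS, hr, hrZ⟩ : ∃ r : Dual ℝ E, (∀ i ∈ S, r (a i) = 0) ∧ r ≠ 0 ∧
      0 ≤ r (∑ i ∈ Z, a i) := by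
    rcases le_total 0 (r₀ (∑ i ∈ Z, a i)) with h | h
    · exact ⟨r₀, hr₀S, hr₀, h⟩
    · exact ⟨-r₀, by simpa using hr₀S, neg_ne_zero.2 hr₀, by simpa using h⟩
  by_cases hpos : ∃ i, 0 < r (a i)
  · exact ⟨r, hrS, hrZ, hpos⟩
  push Not at hpos
  have hZ : r (∑ i ∈ Z, a i) = 0 :=
    hrZ.antisymm' (by rw [map_sum]; exact Finset.sum_nonpos fun i _ => hpos i)
  obtain ⟨i, hi⟩ : ∃ i, r (a i) ≠ 0 := by
    by_contra! h
    exact hr (LinearMap.ext_on_range hspan h)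
  exact ⟨-r, by simpa using hrS, by rw [LinearMap.neg_apply, hZ, neg_zero], i,
    by simpa using (hpos i).lt_of_ne hi⟩

section Tight

variable [Fintype ι]

open Classical in
/-- The constraints `φ (a i) ≤ γ i` that hold with equality at `φ`. -/
noncomputable def tight (a : ι → E) (γ : ι → ℝ) (φ : Dual ℝ E) : Finset ι :=
  {i | φ (a i) = γ i}

lemma mem_tight {i : ι} : i ∈ tight a γ φ ↔ φ (a i) = γ i := by simp [tight]

/-- The tight sets of the points of the polyhedron `{φ | φ (a i) ≤ γ i for all i}`; they encode its
nonempty faces. -/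
def tightSets (a : ι → E) (γ : ι → ℝ) : Set (Finset ι) := tight a γ '' {φ | Feasible a γ φ}

/-- The tight sets that index a basis. When the polyhedron is simple, they encode its vertices. -/
def vertexBases (a : ι → E) (γ : ι → ℝ) : Set (Finset ι) := {T ∈ tightSets a γ | IsBase a T}

/-! ### Linear programming -/

namespace Feasible

lemma exists_ratio_test (hφ : Feasible a γ φ) {r : Dual ℝ E} (hr : ∃ i, 0 < r (a i)) :
    ∃ t : ℝ, 0 ≤ t ∧ Feasible a γ (φ + t • r) ∧ ∃ i ∈ tight a γ (φ + t • r), 0 < r (a i) := by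
  classical
  obtain ⟨j, hj, hmin⟩ := Finset.exists_min_image {i | 0 < r (a i)}
    (fun i => (γ i - φ (a i)) / r (a i)) (hr.imp fun i hi => by simpa using hi)
  simp only [Finset.mem_filter_univ] at hj hmin
  have ht : 0 ≤ (γ j - φ (a j)) / r (a j) := div_nonneg (sub_nonneg.2 (hφ j)) hj.le
  refine ⟨_, ht, fun i => ?_, j, ?_, hj⟩
  · rw [LinearMap.add_apply, LinearMap.smul_apply, smul_eq_mul]
    rcases le_or_gt (r (a i)) 0 with hi | hi
    · linarith [hφ i, mul_nonpos_of_nonneg_of_nonpos ht hi]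
    · linarith [(le_div_iff₀ hi).1 (hmin i hi)]
  · rw [mem_tight, LinearMap.add_apply, LinearMap.smul_apply, smul_eq_mul,
      div_mul_cancel₀ _ hj.ne']
    ring

lemma exists_tight_ssubset (hφ : Feasible a γ φ) {r : Dual ℝ E}
    (hr : ∀ i ∈ tight a γ φ, r (a i) = 0) (hpos : ∃ i, 0 < r (a i)) :
    ∃ t : ℝ, 0 ≤ t ∧ Feasible a γ (φ + t • r) ∧ tight a γ φ ⊂ tight a γ (φ + t • r) := by
  obtain ⟨t, ht, hfeas, j, hj, hrj⟩ := hφ.exists_ratio_test hpos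
  refine ⟨t, ht, hfeas, (Finset.ssubset_iff_of_subset fun i hi => ?_).2
    ⟨j, hj, fun h => hrj.ne' (hr j h)⟩⟩
  simp [mem_tight, hr i hi, mem_tight.1 hi]

lemma exists_pos_add_smul (hφ : Feasible a γ φ) {r : Dual ℝ E}
    (hr : ∀ i ∈ tight a γ φ, r (a i) ≤ 0) : ∃ t : ℝ, 0 < t ∧ Feasible a γ (φ + t • r) := by
  by_cases hpos : ∃ i, 0 < r (a i)
  · obtain ⟨t, ht, hfeas, j, hj, hrj⟩ := hφ.exists_ratio_test hpos
    refine ⟨t, ht.lt_of_ne ?_, hfeas⟩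
    rintro rfl
    exact (hr j (by simpa using hj)).not_gt hrj
  · push Not at hpos
    exact ⟨1, one_pos, fun i => by simpa using add_le_add (hφ i) (hpos i)⟩

lemma sum_mul_eq_iff (hφ : Feasible a γ φ) {S : Finset ι} {c : ι → ℝ} (hc : ∀ i ∈ S, 0 ≤ c i) :
    ∑ i ∈ S, c i * φ (a i) = ∑ i ∈ S, c i * γ i ↔ {i ∈ S | 0 < c i} ⊆ tight a γ φ := by
  rw [Finset.sum_eq_sum_iff_of_le fun i hi => mul_le_mul_of_nonneg_left (hφ i) (hc i hi)]
  simp only [Finset.subset_iff, Finset.mem_filter, and_imp, mem_tight, mul_eq_mul_left_iff]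
  exact forall₂_congr fun i hi => ⟨fun h hpos => h.resolve_right hpos.ne', fun h =>
    (hc i hi).lt_or_eq.imp h Eq.symm⟩

lemma sum_eq_iff (hφ : Feasible a γ φ) {S : Finset ι} :
    φ (∑ i ∈ S, a i) = ∑ i ∈ S, γ i ↔ S ⊆ tight a γ φ := by
  simpa using hφ.sum_mul_eq_iff (S := S) (c := 1) (by simp)

end Feasible

lemma Feasible.exists_spanning_tight (hspan : Submodule.span ℝ (range a) = ⊤)
    (hφ : Feasible a γ φ) (Z : Finset ι) :
    ∃ φ', Feasible a γ φ' ∧ φ (∑ i ∈ Z, a i) ≤ φ' (∑ i ∈ Z, a i) ∧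
      Submodule.span ℝ (a '' tight a γ φ') = ⊤ := by
  obtain ⟨φ', ⟨hφ', hle⟩, hmax⟩ := Set.Finite.exists_maximalFor' (tight a γ)
    {φ' | Feasible a γ φ' ∧ φ (∑ i ∈ Z, a i) ≤ φ' (∑ i ∈ Z, a i)} (Set.toFinite _) ⟨φ, hφ, le_rfl⟩
  refine ⟨φ', hφ', hle, by_contra fun hlt => ?_⟩
  obtain ⟨r, hr, hrZ, hpos⟩ := exists_ascent_direction hspan hlt Z
  obtain ⟨t, ht, hfeas, hss⟩ := hφ'.exists_tight_ssubset hr hpos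
  refine hss.not_ge (hmax ⟨hfeas, hle.trans ?_⟩ hss.le)
  rw [LinearMap.add_apply, LinearMap.smul_apply]
  exact le_add_of_nonneg_right (mul_nonneg ht hrZ)

lemma finite_setOf_isBase_tight (a : ι → E) (γ : ι → ℝ) :
    {φ | IsBase a (tight a γ φ)}.Finite :=
  .of_injOn (f := tight a γ) (t := univ) (mapsTo_univ _ _) (fun _ hφ _ _ h =>
    hφ.dual_ext fun _ hi =>
      (mem_tight.1 hi).trans (mem_tight.1 (h ▸ hi)).symm) (toFinite _)

lemma exists_isBase_tight_isMaxOn (hspan : Submodule.span ℝ (range a) = ⊤)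
    (hγ : ∀ φ, LinearIndepOn ℝ a (tight a γ φ)) (hne : ∃ φ, Feasible a γ φ) (Z : Finset ι) :
    ∃ φ, Feasible a γ φ ∧ IsBase a (tight a γ φ) ∧
      IsMaxOn (fun φ : Dual ℝ E => φ (∑ i ∈ Z, a i)) {φ | Feasible a γ φ} φ := by
  have hvertex : ∀ φ, Feasible a γ φ → ∃ φ', (Feasible a γ φ' ∧ IsBase a (tight a γ φ')) ∧
      φ (∑ i ∈ Z, a i) ≤ φ' (∑ i ∈ Z, a i) := fun φ hφ =>
    let ⟨φ', hφ', hle, htop⟩ := hφ.exists_spanning_tight hspan Z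
    ⟨φ', ⟨hφ', hγ φ', htop⟩, hle⟩
  obtain ⟨φ₀, hφ₀⟩ := hne
  obtain ⟨φ, ⟨hφ, hbase⟩, hmax⟩ := Set.exists_max_image
    {φ | Feasible a γ φ ∧ IsBase a (tight a γ φ)} (fun φ => φ (∑ i ∈ Z, a i))
    ((finite_setOf_isBase_tight a γ).subset fun _ h => h.2)
    (let ⟨φ, h, _⟩ := hvertex φ₀ hφ₀; ⟨φ, h⟩)
  refine ⟨φ, hφ, hbase, fun φ' hφ' => ?_⟩
  obtain ⟨φ'', h, hle⟩ := hvertex φ' hφ'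
  exact hle.trans (hmax φ'' h)

lemma Feasible.baseCoord_nonneg_of_isMaxOn (hφ : Feasible a γ φ) (hT : IsBase a (tight a γ φ))
    {ψ : E} (hmax : IsMaxOn (fun φ : Dual ℝ E => φ ψ) {φ | Feasible a γ φ} φ) {i : ι}
    (hi : i ∈ tight a γ φ) : 0 ≤ baseCoord a (tight a γ φ) i ψ := by
  classical
  obtain ⟨t, ht, hfeas⟩ := hφ.exists_pos_add_smul
    (r := -baseCoord a (tight a γ φ) i) fun j hj => by
      rcases eq_or_ne i j with rfl | hij
      · simp [hT.baseCoord_self hi]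
      · simp [hT.baseCoord_of_ne hj hij]
  have hle : (φ + t • -baseCoord a (tight a γ φ) i) ψ ≤ φ ψ := hmax hfeas
  simp only [LinearMap.add_apply, LinearMap.smul_apply, LinearMap.neg_apply, smul_eq_mul] at hle
  exact nonneg_of_mul_nonneg_right (by linarith) ht

lemma exists_mem_vertexBases_baseCoord_nonneg (hspan : Submodule.span ℝ (range a) = ⊤)
    (hγ : ∀ φ, LinearIndepOn ℝ a (tight a γ φ)) (hne : ∃ φ, Feasible a γ φ) (Z : Finset ι) :
    ∃ T ∈ vertexBases a γ, ∀ i ∈ T, 0 ≤ baseCoord a T i (∑ j ∈ Z, a j) :=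
  let ⟨φ, hφ, hbase, hmax⟩ := exists_isBase_tight_isMaxOn hspan hγ hne Z
  ⟨tight a γ φ, ⟨⟨φ, hφ, rfl⟩, hbase⟩, fun _ hi => hφ.baseCoord_nonneg_of_isMaxOn hbase hmax hi⟩

/-! ### Perturbation of the right-hand sides -/

lemma dense_setOf_forall_ne_zero {X J : Type*} [TopologicalSpace X] [BaireSpace X] [AddCommGroup X]
    [ContinuousAdd X] [Module ℝ X] [ContinuousSMul ℝ X] [Countable J] {f : J → X →L[ℝ] ℝ}
    (hf : ∀ j, f j ≠ 0) : Dense {x | ∀ j, f j x ≠ 0} := by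
  rw [ofPred_forall]
  refine dense_iInter_of_isOpen (fun j => isOpen_ne_fun (f j).continuous continuous_const)
    fun j => ?_
  suffices interior ((f j).ker : Set X) = ∅ from interior_eq_empty_iff_dense_compl.1 this
  by_contra hinterior
  refine hf j (ContinuousLinearMap.coe_injective (LinearMap.ker_eq_top.1 ?_))
  exact Submodule.eq_top_of_nonempty_interior' _ (nonempty_iff_ne_empty.2 hinterior)

lemma dense_setOf_linearIndepOn_tight (a : ι → E) :
    Dense {γ : ι → ℝ | ∀ φ, LinearIndepOn ℝ a (tight a γ φ)} := by
  classical
  have hrel : ∀ T : {T : Finset ι // ¬ LinearIndepOn ℝ a T},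
      ∃ g : ι → ℝ, ∑ i ∈ T.1, g i • a i = 0 ∧ ∃ j ∈ T.1, g j ≠ 0 := fun T => by
    simpa [linearIndepOn_finset_iff] using T.2
  choose g hg hne using hrel
  let f T : (ι → ℝ) →L[ℝ] ℝ := ∑ i ∈ T.1, g T i • ContinuousLinearMap.proj i
  have hf : ∀ T, f T ≠ 0 := fun T h => by
    obtain ⟨j, hj, hgj⟩ := hne T
    simpa [f, Pi.single_apply, hj, hgj] using DFunLike.congr_fun h (Pi.single j 1)
  refine (dense_setOf_forall_ne_zero hf).mono fun γ hγ φ => ?_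
  by_contra hdep
  refine hγ ⟨_, hdep⟩ ?_
  calc f ⟨_, hdep⟩ γ = ∑ i ∈ tight a γ φ, g ⟨_, hdep⟩ i * γ i := by simp [f]
    _ = ∑ i ∈ tight a γ φ, g ⟨_, hdep⟩ i * φ (a i) :=
      Finset.sum_congr rfl fun i hi => by rw [mem_tight.1 hi]
    _ = φ (∑ i ∈ tight a γ φ, g ⟨_, hdep⟩ i • a i) := by simp
    _ = 0 := by rw [hg ⟨_, hdep⟩, map_zero]

lemma exists_linearIndepOn_tight_forall_lt {J : Type*} [Finite J] {f g : J → (ι → ℝ) → ℝ}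
    (hf : ∀ j, Continuous (f j)) (hg : ∀ j, Continuous (g j)) (a : ι → E) (β : ι → ℝ) :
    ∃ γ, (∀ φ, LinearIndepOn ℝ a (tight a γ φ)) ∧ ∀ j, f j β < g j β → f j γ < g j γ := by
  have hnear : ∀ᶠ γ in nhds β, ∀ j, f j β < g j β → f j γ < g j γ :=
    Filter.eventually_all.2 fun j => Filter.eventually_imp_distrib_left.2 fun h =>
      (hf j).continuousAt.eventually_lt (hg j).continuousAt h
  obtain ⟨γ, hγ, hind⟩ := (dense_setOf_linearIndepOn_tight a).inter_nhds_nonempty hnear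
  exact ⟨γ, hγ, hind⟩

lemma IsBase.subset_tight_iff {T : Finset ι} (hT : IsBase a T) {Z : Finset ι}
    (hc : ∀ i ∈ T, 0 ≤ baseCoord a T i (∑ j ∈ Z, a j))
    (hβ : ∑ i ∈ T, baseCoord a T i (∑ j ∈ Z, a j) * β i = ∑ j ∈ Z, β j)
    (hφ : Feasible a β φ) :
    {i ∈ T | 0 < baseCoord a T i (∑ j ∈ Z, a j)} ⊆ tight a β φ ↔ Z ⊆ tight a β φ := by
  rw [← hφ.sum_mul_eq_iff hc, ← hφ.sum_eq_iff, hT.sum_baseCoord_mul, hβ]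

lemma exists_forall_mem_tightSets_exists_subset (hspan : Submodule.span ℝ (range a) = ⊤)
    (hne : ∀ γ, ∃ φ, Feasible a γ φ) (β : ι → ℝ) :
    ∃ γ, ∀ Z ∈ tightSets a β, ∃ T ∈ vertexBases a γ, ∃ S ⊆ T,
      ∀ φ, Feasible a β φ → (S ⊆ tight a β φ ↔ Z ⊆ tight a β φ) := by
  classical
  obtain ⟨γ, hγ, hlt⟩ := exists_linearIndepOn_tight_forall_lt (J := Finset ι × Finset ι)
    (f := fun p γ => ∑ j ∈ p.2, γ j)
    (g := fun p γ => ∑ i ∈ p.1, baseCoord a p.1 i (∑ j ∈ p.2, a j) * γ i)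
    (fun _ => by fun_prop) (fun _ => by fun_prop) a β
  refine ⟨γ, ?_⟩
  rintro _ ⟨φ, hφ, rfl⟩
  obtain ⟨T, ⟨⟨ψ, hψ, hψT⟩, hT⟩, hc⟩ :=
    exists_mem_vertexBases_baseCoord_nonneg hspan hγ (hne γ) (tight a β φ)
  set c := fun i => baseCoord a T i (∑ j ∈ tight a β φ, a j)
  -- The dual certificate found at `γ` stays valid at `β`, because `γ` is so close to `β` that a
  -- strict inequality in the other direction at `β` would persist at `γ`.
  have hle : ∑ i ∈ T, c i * β i ≤ ∑ j ∈ tight a β φ, β j := by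
    refine not_lt.1 fun h => (hlt (T, tight a β φ) h).not_ge ?_
    calc ∑ i ∈ T, c i * γ i = ∑ i ∈ T, c i * ψ (a i) :=
          Finset.sum_congr rfl fun i hi => by rw [mem_tight.1 (hψT ▸ hi)]
      _ = ψ (∑ j ∈ tight a β φ, a j) := hT.sum_baseCoord_mul ψ _
      _ ≤ ∑ j ∈ tight a β φ, γ j := hψ.map_sum_le _
  have hge : ∑ j ∈ tight a β φ, β j ≤ ∑ i ∈ T, c i * β i :=
    calc ∑ j ∈ tight a β φ, β j = φ (∑ j ∈ tight a β φ, a j) :=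
          (hφ.sum_eq_iff.2 subset_rfl).symm
      _ = ∑ i ∈ T, c i * φ (a i) := (hT.sum_baseCoord_mul φ _).symm
      _ ≤ ∑ i ∈ T, c i * β i :=
        Finset.sum_le_sum fun i hi => mul_le_mul_of_nonneg_left (hφ i) (hc i hi)
  exact ⟨T, ⟨⟨ψ, hψ, hψT⟩, hT⟩, _, Finset.filter_subset _ _,
    fun φ' hφ' => hT.subset_tight_iff hc (hle.antisymm hge) hφ'⟩

lemma exists_ncard_tightSets_le (hspan : Submodule.span ℝ (range a) = ⊤)
    (hne : ∀ γ, ∃ φ, Feasible a γ φ) (β : ι → ℝ) :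
    ∃ γ, (tightSets a β).ncard ≤ (vertexBases a γ).ncard * 2 ^ finrank ℝ E := by
  classical
  obtain ⟨γ, hγ⟩ := exists_forall_mem_tightSets_exists_subset hspan hne β
  choose! T hT S hST hS using hγ
  refine ⟨γ, ?_⟩
  let verts := (vertexBases a γ).toFinite.toFinset
  have hinj : InjOn S (tightSets a β) := by
    have hle : ∀ Z₁ ∈ tightSets a β, ∀ Z₂ ∈ tightSets a β, S Z₁ = S Z₂ → Z₁ ⊆ Z₂ := by
      rintro Z₁ h₁ _ ⟨φ, hφ, rfl⟩ h
      exact (hS Z₁ h₁ φ hφ).1 (h ▸ (hS _ ⟨φ, hφ, rfl⟩ φ hφ).2 subset_rfl)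
    exact fun Z₁ h₁ Z₂ h₂ h => (hle Z₁ h₁ Z₂ h₂ h).antisymm (hle Z₂ h₂ Z₁ h₁ h.symm)
  calc (tightSets a β).ncard ≤ (verts.biUnion Finset.powerset : Set (Finset ι)).ncard :=
        ncard_le_ncard_of_injOn S (fun Z hZ => by
          simpa [verts] using ⟨T Z, hT Z hZ, hST Z hZ⟩) hinj
    _ ≤ verts.card * 2 ^ finrank ℝ E := by
      rw [ncard_coe_finset]
      refine Finset.card_biUnion_le_card_mul _ _ _ fun T hT => ?_
      have hbase : IsBase a T := ((Set.Finite.mem_toFinset _).1 hT).2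
      rw [Finset.card_powerset, hbase.card_eq_finrank]
    _ = (vertexBases a γ).ncard * 2 ^ finrank ℝ E := by rw [← ncard_eq_toFinset_card]

end Tight

/-! ### Seidel's vertex count -/

open Classical in
/-- The elements of the base `T` at which `h` has a nonpositive coordinate. If `T` is the tight set
of a vertex, these are the edges at the vertex along which `h` does not decrease; the edges along
which it does not increase form `lowerPart a (-h) T`. -/
noncomputable def lowerPart (a : ι → E) (h : E) (T : Finset ι) : Finset ι :=
  {i ∈ T | baseCoord a T i h ≤ 0}

lemma mem_lowerPart {h : E} {T : Finset ι} {i : ι} :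
    i ∈ lowerPart a h T ↔ i ∈ T ∧ baseCoord a T i h ≤ 0 := by simp [lowerPart]

lemma IsBase.exists_mem_lowerPart {T : Finset ι} (hT : IsBase a T) {q : Dual ℝ E} (hq₀ : q ≠ 0)
    (hq : ∀ i ∈ T, 0 ≤ q (a i)) {h : E} (hqh : q h ≤ 0) : ∃ i ∈ lowerPart a h T, 0 < q (a i) := by
  by_contra! hlow
  have hcoord : ∀ i ∈ T, 0 < q (a i) → 0 < baseCoord a T i h := fun i hi hpos =>
    not_le.1 fun hle => (hlow i (mem_lowerPart.2 ⟨hi, hle⟩)).not_gt hpos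
  have hterm : ∀ i ∈ T, 0 ≤ baseCoord a T i h * q (a i) := fun i hi => by
    rcases (hq i hi).eq_or_lt with h0 | hpos
    · rw [← h0, mul_zero]
    · exact (mul_pos (hcoord i hi hpos) hpos).le
  have hsum : ∑ i ∈ T, baseCoord a T i h * q (a i) = 0 :=
    ((hT.sum_baseCoord_mul q h).trans_le hqh).antisymm (Finset.sum_nonneg hterm)
  refine hq₀ (hT.dual_ext fun i hi => ?_)
  by_contra hne
  have hpos : 0 < q (a i) := (hq i hi).lt_of_ne' hne
  exact (mul_pos (hcoord i hi hpos) hpos).ne' ((Finset.sum_eq_zero_iff_of_nonneg hterm).1 hsum i hi)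

lemma exists_feasible [Finite ι] {q : Dual ℝ E} (hq : ∀ i, 0 < q (a i)) (γ : ι → ℝ) :
    ∃ φ, Feasible a γ φ := by
  obtain ⟨t, ht⟩ := (finite_range fun i => γ i / q (a i)).bddBelow
  exact ⟨t • q, fun i => (le_div_iff₀ (hq i)).1 (ht ⟨i, rfl⟩)⟩

section Generic

variable {h : E} {T : Finset ι} {κ : ι → Bool} {m : ℕ}

lemma exists_forall_baseCoord_ne_zero [Finite ι] {B : Type*} (a : ι → E) (p : B → Dual ℝ E) :
    ∃ h, (∀ b, p b h = 0) ∧ ∀ T, IsBase a T → ∀ i ∈ T, ∀ j ∈ T, i ≠ j →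
      (∀ b, p b (a i) = p b (a j)) → baseCoord a T i h ≠ 0 := by
  have hdiff : ∀ x : {x : Finset ι × ι × ι | IsBase a x.1 ∧ x.2.1 ∈ x.1 ∧ x.2.2 ∈ x.1 ∧
      x.2.1 ≠ x.2.2 ∧ ∀ b, p b (a x.2.1) = p b (a x.2.2)},
      ∃ y ∈ ⨅ b, (p b).ker, baseCoord a x.1.1 x.1.2.1 y ≠ 0 := by
    rintro ⟨⟨T, i, j⟩, hT, hi, hj, hij, hp⟩
    exact ⟨a i - a j, by simp [hp], by simp [hT.baseCoord_self hi, hT.baseCoord_of_ne hj hij]⟩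
  obtain ⟨h, hker, hne⟩ := Module.Dual.exists_forall_mem_ne_zero_of_forall_exists _ _ hdiff
  exact ⟨h, by simpa using hker, fun T hT i hi j hj hij hp =>
    hne ⟨(T, i, j), hT, hi, hj, hij, hp⟩⟩

lemma card_lowerPart_le_or (hκ : ∀ i ∈ T, ∀ j ∈ T, i ≠ j → κ i = κ j → baseCoord a T i h ≠ 0)
    (hT : T.card ≤ 2 * m + 4) :
    (lowerPart a h T).card ≤ m + 2 ∨ (lowerPart a (-h) T).card ≤ m + 2 := by
  classical
  have hlow : ∀ h', lowerPart a h' T ⊆ T := fun _ => Finset.filter_subset _ _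
  have hunion := Finset.card_le_card (Finset.union_subset (hlow h) (hlow (-h)))
  have hcard := Finset.card_union_add_card_inter (lowerPart a h T) (lowerPart a (-h) T)
  rcases le_or_gt (lowerPart a h T ∩ lowerPart a (-h) T).card 1 with hinter | hinter
  · omega
  have hzero : ∀ i ∈ lowerPart a h T ∩ lowerPart a (-h) T, i ∈ T ∧ baseCoord a T i h = 0 :=
    fun i hi => by
      simp only [Finset.mem_inter, mem_lowerPart, map_neg, Left.neg_nonpos_iff] at hi
      exact ⟨hi.1.1, hi.1.2.antisymm hi.2.2⟩
  obtain ⟨i, hi, j, hj, hij⟩ := Finset.one_lt_card.1 hinter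
  obtain ⟨⟨hiT, hi0⟩, hjT, hj0⟩ := And.intro (hzero i hi) (hzero j hj)
  have hpair : T ⊆ {i, j} := fun k hk => by
    have hκij : κ i ≠ κ j := fun h => hκ i hiT j hjT hij h hi0
    have hcolor : κ i = κ k ∨ κ j = κ k :=
      (by decide : ∀ x y z : Bool, x ≠ y → x = z ∨ y = z) _ _ _ hκij
    rw [Finset.mem_insert, Finset.mem_singleton]
    exact hcolor.imp (fun h => by_contra fun hne => hκ i hiT k hk (Ne.symm hne) h hi0)
      (fun h => by_contra fun hne => hκ j hjT k hk (Ne.symm hne) h hj0)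
  have hT₂ : T.card ≤ 2 := (Finset.card_le_card hpair).trans Finset.card_le_two
  exact .inl ((Finset.card_le_card (hlow h)).trans (hT₂.trans (Nat.le_add_left 2 m)))

end Generic

lemma exists_fin_insert_image_eq [DecidableEq ι] {m : ℕ} {R : Finset ι} (hR : R.card ≤ m) (x : ι) :
    ∃ f : Fin m → ι, insert x (Finset.univ.image f) = insert x R := by
  obtain ⟨e⟩ := Function.Embedding.nonempty_of_card_le (α := R) (β := Fin m) (by simpa using hR)
  refine ⟨Function.extend e Subtype.val fun _ => x, Finset.ext fun z => ?_⟩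
  simp only [Finset.mem_insert, Finset.mem_image, Finset.mem_univ, true_and]
  refine or_congr_right' fun hzx => ⟨?_, fun hz => ⟨e ⟨z, hz⟩, e.injective.extend_apply _ _ _⟩⟩
  rintro ⟨k, rfl⟩
  by_cases hk : ∃ r, e r = k
  · obtain ⟨r, rfl⟩ := hk
    simp [e.injective.extend_apply]
  · exact absurd (Function.extend_apply' _ _ _ hk) hzx

lemma ncard_setOf_card_le_inter_nonempty_le [Fintype ι] (X Y : Finset ι) (hXY : Disjoint X Y)
    (m : ℕ) :
    {G : Finset ι | G.card ≤ m + 2 ∧ (∃ x ∈ G, x ∈ X) ∧ ∃ y ∈ G, y ∈ Y}.ncard ≤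
      X.card * Y.card * Fintype.card ι ^ m := by
  classical
  let enum : ι × ι × (Fin m → ι) → Finset ι := fun g =>
    insert g.1 (insert g.2.1 (Finset.univ.image g.2.2))
  calc _ ≤ (enum '' (X ×ˢ Y ×ˢ Finset.univ : Finset (ι × ι × (Fin m → ι)))).ncard := by
        refine ncard_le_ncard ?_ (toFinite _)
        rintro G ⟨hG, ⟨x, hxG, hx⟩, y, hyG, hy⟩
        have hy' : y ∈ G.erase x :=
          Finset.mem_erase.2 ⟨fun h => Finset.disjoint_left.1 hXY hx (h ▸ hy), hyG⟩
        have hR : ((G.erase x).erase y).card ≤ m := by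
          rw [Finset.card_erase_of_mem hy', Finset.card_erase_of_mem hxG]
          omega
        obtain ⟨f, hf⟩ := exists_fin_insert_image_eq hR y
        refine ⟨(x, y, f), by simp [hx, hy], ?_⟩
        simp only [enum, hf, Finset.insert_erase hy', Finset.insert_erase hxG]
    _ ≤ (X ×ˢ Y ×ˢ Finset.univ : Finset (ι × ι × (Fin m → ι))).card := by
      rw [← ncard_coe_finset]
      exact ncard_image_le (Finset.finite_toSet _)
    _ = X.card * Y.card * Fintype.card ι ^ m := by simp [mul_assoc]

variable [Fintype ι]

lemma Feasible.tight_subset_of_lowerPart_subset {h : E} (hφ' : Feasible a γ φ')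
    (hT : IsBase a (tight a γ φ)) (hlow : lowerPart a h (tight a γ φ) ⊆ tight a γ φ') :
    φ' h ≤ φ h ∧ (φ' h = φ h → tight a γ φ ⊆ tight a γ φ') := by
  have hterm : ∀ i ∈ tight a γ φ, baseCoord a (tight a γ φ) i h * φ' (a i) ≤
      baseCoord a (tight a γ φ) i h * φ (a i) := fun i hi => by
    rw [mem_tight.1 hi]
    rcases le_or_gt (baseCoord a (tight a γ φ) i h) 0 with hc | hc
    · rw [mem_tight.1 (hlow (mem_lowerPart.2 ⟨hi, hc⟩))]
    · exact mul_le_mul_of_nonneg_left (hφ' i) hc.le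
  rw [← hT.sum_baseCoord_mul φ h, ← hT.sum_baseCoord_mul φ' h]
  refine ⟨Finset.sum_le_sum hterm, fun heq i hi => ?_⟩
  have hi' := (Finset.sum_eq_sum_iff_of_le hterm).1 heq i hi
  rcases le_or_gt (baseCoord a (tight a γ φ) i h) 0 with hc | hc
  · exact hlow (mem_lowerPart.2 ⟨hi, hc⟩)
  · exact mem_tight.2 ((mul_left_cancel₀ hc.ne' hi').trans (mem_tight.1 hi))

-- The vertex `T` is the unique maximizer of `h` among the feasible points at which the constraints
-- in `lowerPart a h T` are tight.
lemma injOn_lowerPart (a : ι → E) (γ : ι → ℝ) (h : E) :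
    InjOn (lowerPart a h) (vertexBases a γ) := by
  rintro _ ⟨⟨φ, hφ, rfl⟩, hT⟩ _ ⟨⟨φ', hφ', rfl⟩, hT'⟩ heq
  obtain ⟨hle, hsub⟩ := hφ'.tight_subset_of_lowerPart_subset (h := h) hT
    (heq.subset.trans (Finset.filter_subset _ _))
  obtain ⟨hle', hsub'⟩ := hφ.tight_subset_of_lowerPart_subset (h := h) hT'
    (heq.superset.trans (Finset.filter_subset _ _))
  exact (hsub (hle.antisymm hle')).antisymm (hsub' (hle'.antisymm hle))

section TwoColored

variable {κ : ι → Bool} {p : Bool → Dual ℝ E}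

lemma ncard_setOf_card_lowerPart_le (hp : ∀ b i, p b (a i) = if κ i = b then 1 else 0)
    (hκ : Function.Surjective κ) {h : E} (hph : ∀ b, p b h = 0) (γ : ι → ℝ) (m : ℕ) :
    {T ∈ vertexBases a γ | (lowerPart a h T).card ≤ m + 2}.ncard ≤
      #{i | κ i = true} * #{i | κ i = false} * Fintype.card ι ^ m := by
  classical
  refine (ncard_le_ncard_of_injOn (lowerPart a h) ?_ ((injOn_lowerPart a γ h).mono (sep_subset _ _))
    (toFinite _)).trans (ncard_setOf_card_le_inter_nonempty_le _ _ ?_ m)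
  · rintro T ⟨⟨-, hT⟩, hcard⟩
    have hcolor : ∀ b, ∃ i ∈ lowerPart a h T, κ i = b := fun b => by
      obtain ⟨j, rfl⟩ := hκ b
      obtain ⟨i, hi, hpos⟩ := hT.exists_mem_lowerPart (q := p (κ j))
        (fun h0 => by simpa [h0] using hp (κ j) j) (fun i _ => by rw [hp]; positivity) (hph _).le
      refine ⟨i, hi, by_contra fun hne => ?_⟩
      simp [hp, hne] at hpos
    exact ⟨hcard, by simpa using hcolor true, by simpa using hcolor false⟩
  · simp +contextual [Finset.disjoint_left]

lemma ncard_vertexBases_le (hp : ∀ b i, p b (a i) = if κ i = b then 1 else 0)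
    (hκ : Function.Surjective κ) {m : ℕ} (hm : finrank ℝ E ≤ 2 * m + 4) (γ : ι → ℝ) :
    (vertexBases a γ).ncard ≤
      2 * (#{i | κ i = true} * #{i | κ i = false} * Fintype.card ι ^ m) := by
  obtain ⟨h, hph, hgen⟩ := exists_forall_baseCoord_ne_zero a p
  calc (vertexBases a γ).ncard
      ≤ ({T ∈ vertexBases a γ | (lowerPart a h T).card ≤ m + 2} ∪
          {T ∈ vertexBases a γ | (lowerPart a (-h) T).card ≤ m + 2}).ncard := by
        refine ncard_le_ncard (fun T hT => ?_) (toFinite _)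
        exact (card_lowerPart_le_or (κ := κ) (fun i hi j hj hij hκij => hgen T hT.2 i hi j hj hij
          fun b => (hp b i).trans (hκij ▸ (hp b j).symm)) (hT.2.card_eq_finrank.trans_le hm)).imp
          (And.intro hT) (And.intro hT)
    _ ≤ _ := ncard_union_le _ _
    _ ≤ 2 * (#{i | κ i = true} * #{i | κ i = false} * Fintype.card ι ^ m) := by
      rw [two_mul]
      exact add_le_add (ncard_setOf_card_lowerPart_le hp hκ hph γ m)
        (ncard_setOf_card_lowerPart_le hp hκ (by simpa using hph) γ m)

lemma ncard_tightSets_le_of_span_eq_top (hspan : Submodule.span ℝ (range a) = ⊤)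
    (hp : ∀ b i, p b (a i) = if κ i = b then 1 else 0) (hκ : Function.Surjective κ) {m : ℕ}
    (hm : finrank ℝ E ≤ 2 * m + 4) (β : ι → ℝ) :
    (tightSets a β).ncard ≤
      2 ^ (2 * m + 5) * (#{i | κ i = true} * #{i | κ i = false} * Fintype.card ι ^ m) := by
  obtain ⟨γ, hγ⟩ := exists_ncard_tightSets_le hspan
    (exists_feasible (q := p true + p false) fun i => by cases h : κ i <;> simp [hp, h]) β
  calc (tightSets a β).ncard ≤ (vertexBases a γ).ncard * 2 ^ finrank ℝ E := hγ
    _ ≤ 2 * (#{i | κ i = true} * #{i | κ i = false} * Fintype.card ι ^ m) * 2 ^ (2 * m + 4) :=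
      Nat.mul_le_mul (ncard_vertexBases_le hp hκ hm γ) (Nat.pow_le_pow_right two_pos hm)
    _ = _ := by ring

lemma ncard_tightSets_le (hp : ∀ b i, p b (a i) = if κ i = b then 1 else 0)
    (hκ : Function.Surjective κ) {m : ℕ}
    (hm : finrank ℝ (Submodule.span ℝ (range a)) ≤ 2 * m + 4) (β : ι → ℝ) :
    (tightSets a β).ncard ≤
      2 ^ (2 * m + 5) * (#{i | κ i = true} * #{i | κ i = false} * Fintype.card ι ^ m) := by
  let a' (i : ι) : Submodule.span ℝ (range a) := ⟨a i, Submodule.subset_span ⟨i, rfl⟩⟩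
  have hspan : Submodule.span ℝ (range a') = ⊤ := by
    rw [← Submodule.span_setOfPred_mem_eq_top]
    congr 1
    ext x
    simp [a', Subtype.ext_iff]
  calc (tightSets a β).ncard ≤ (tightSets a' β).ncard := by
        refine ncard_le_ncard ?_ (toFinite _)
        rintro _ ⟨φ, hφ, rfl⟩
        exact ⟨φ ∘ₗ Submodule.subtype _, hφ, rfl⟩
    _ ≤ _ := ncard_tightSets_le_of_span_eq_top hspan
      (p := fun b => p b ∘ₗ Submodule.subtype _) hp hκ hm β

end TwoColored

end Polyhedra

/-! ### Faces of Minkowski sums -/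

section Faces

variable {E : Type*} [AddCommGroup E] [Module ℝ E]

/-- The constraint vector, in one dimension more than `E`, of the point `z i` of the summand of
color `κ i`. A functional on `E` normalized to be `1` at `e`, together with upper bounds for its
values on the points of each color, amounts to a functional satisfying all the constraints. -/
def sliceVector {ι : Type*} (e : E) (z : ι → E) (κ : ι → Bool) (i : ι) :
    (E ⧸ Submodule.span ℝ {e}) × (Bool → ℝ) :=
  (Submodule.Quotient.mk (z i), Pi.single (κ i) 1)

lemma exists_apply_sliceVector_eq {ι : Type*} {e : E} {l ℓ : Dual ℝ E} (hl : l e = ℓ e)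
    (z : ι → E) (κ : ι → Bool) (M : Bool → ℝ) :
    ∃ φ : Dual ℝ ((E ⧸ Submodule.span ℝ {e}) × (Bool → ℝ)),
      ∀ i, φ (sliceVector e z κ i) = l (z i) - M (κ i) - ℓ (z i) := by
  have hker : Submodule.span ℝ {e} ≤ (l - ℓ).ker := by simp [Submodule.span_le, hl]
  refine ⟨((Submodule.span ℝ {e}).liftQ (l - ℓ) hker).coprod (-Fintype.linearCombination ℝ M),
    fun i => ?_⟩
  simp only [sliceVector, LinearMap.coprod_apply, Submodule.liftQ_apply, LinearMap.sub_apply,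
    LinearMap.neg_apply, Fintype.linearCombination_apply_single, smul_eq_mul, one_mul]
  ring

lemma finrank_slice [FiniteDimensional ℝ E] {e : E} (he : e ≠ 0) :
    finrank ℝ ((E ⧸ Submodule.span ℝ {e}) × (Bool → ℝ)) = finrank ℝ E + 1 := by
  rw [← (Submodule.span ℝ {e}).finrank_quotient_add_finrank, finrank_span_singleton he,
    finrank_prod, finrank_fintype_fun_eq_card, Fintype.card_bool]

variable [TopologicalSpace E]

lemma toExposed_add (l : StrongDual ℝ E) (A B : Set E) :
    l.toExposed (A + B) = l.toExposed A + l.toExposed B := by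
  ext z
  constructor
  · rintro ⟨⟨x, hx, y, hy, rfl⟩, hmax⟩
    exact ⟨x, ⟨hx, fun x' hx' => by simpa using hmax _ (add_mem_add hx' hy)⟩,
      y, ⟨hy, fun y' hy' => by simpa using hmax _ (add_mem_add hx hy')⟩, rfl⟩
  · rintro ⟨x, ⟨hx, hxmax⟩, y, ⟨hy, hymax⟩, rfl⟩
    refine ⟨add_mem_add hx hy, ?_⟩
    rintro _ ⟨x', hx', y', hy', rfl⟩
    simpa using add_le_add (hxmax x' hx') (hymax y' hy')

lemma toExposed_smul {c : ℝ} (hc : 0 < c) (l : StrongDual ℝ E) (A : Set E) :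
    (c • l).toExposed A = l.toExposed A := by
  ext x
  simp [ContinuousLinearMap.toExposed, hc]

lemma toExposed_convexHull (l : StrongDual ℝ E) (A : Set E) :
    l.toExposed (convexHull ℝ A) = convexHull ℝ (l.toExposed A) := by
  refine Subset.antisymm ?_ (convexHull_min ?_ ?_)
  · rintro z ⟨hz, hmax⟩
    obtain ⟨J, _, w, x, hw₀, hw₁, hx, rfl⟩ := mem_convexHull_iff_exists_fintype.1 hz
    set z := ∑ j, w j • x j with hz_def
    have hle : ∀ j, l (x j) ≤ l z := fun j => hmax _ (subset_convexHull ℝ A (hx j))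
    have hsum : ∑ j, w j * l (x j) = ∑ j, w j * l z := by
      rw [← Finset.sum_mul, hw₁, one_mul, hz_def, map_sum]
      simp only [map_smul, smul_eq_mul]
    have heq : ∀ j, w j ≠ 0 → l (x j) = l z := fun j hj =>
      mul_left_cancel₀ hj ((Finset.sum_eq_sum_iff_of_le fun j _ =>
        mul_le_mul_of_nonneg_left (hle j) (hw₀ j)).1 hsum j (Finset.mem_univ j))
    rw [hz_def, ← finsum_eq_sum_of_fintype]
    refine (convex_convexHull ℝ _).finsum_mem hw₀ (by rwa [finsum_eq_sum_of_fintype]) fun j hj =>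
      subset_convexHull ℝ _ ⟨hx j, fun y hy => ?_⟩
    exact (hmax y (subset_convexHull ℝ A hy)).trans (heq j hj).ge
  · rintro x ⟨hx, hmax⟩
    exact ⟨subset_convexHull ℝ A hx,
      fun y hy => convexHull_min hmax (convex_halfSpace_le l.toLinearMap.isLinear (l x)) hy⟩
  · exact ContinuousLinearMap.toExposed.isExposed.convex (convex_convexHull ℝ A)

lemma toExposed_range {α : Type*} {x : α → E} {l : StrongDual ℝ E} {v₀ : α}
    (hv₀ : ∀ v, l (x v) ≤ l (x v₀)) :
    l.toExposed (range x) = x '' {v | l (x v) = l (x v₀)} := by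
  ext z
  constructor
  · rintro ⟨⟨v, rfl⟩, hmax⟩
    exact ⟨v, (hv₀ v).antisymm (hmax _ ⟨v₀, rfl⟩), rfl⟩
  · rintro ⟨v, hv, rfl⟩
    exact ⟨⟨v, rfl⟩, forall_mem_range.2 fun w => (hv₀ w).trans hv.ge⟩

/-- The faces of `C` exposed by the functionals that are positive at `e`. -/
def facesToward (C : Set E) (e : E) : Set (Set E) :=
  {F | ∃ l : StrongDual ℝ E, 0 < l e ∧ l.toExposed C = F}

lemma exists_apply_eq_one_of_mem_facesToward {C F : Set E} {e : E} (hF : F ∈ facesToward C e) :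
    ∃ l : StrongDual ℝ E, l e = 1 ∧ l.toExposed C = F := by
  obtain ⟨l, hl, rfl⟩ := hF
  exact ⟨(l e)⁻¹ • l, by simp [hl.ne'], toExposed_smul (inv_pos.2 hl) l C⟩

variable {α β : Type*} {x : α → E} {y : β → E}

/-- The Minkowski sum of the convex hulls of the points of the two summands that are labeled by
`Z`. -/
def labelHull (x : α → E) (y : β → E) (Z : Finset (α ⊕ β)) : Set E :=
  convexHull ℝ (x '' {v | Sum.inl v ∈ Z}) + convexHull ℝ (y '' {w | Sum.inr w ∈ Z})

section Fintype

variable [Fintype α] [Fintype β] [Nonempty α] [Nonempty β]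

lemma toExposed_mem_image_tightSets {e : E} {l ℓ : StrongDual ℝ E} (hl : l e = ℓ e) :
    l.toExposed (convexHull ℝ (range x) + convexHull ℝ (range y)) ∈ labelHull x y ''
      tightSets (sliceVector e (Sum.elim x y) Sum.isLeft) (fun i => -ℓ (Sum.elim x y i)) := by
  obtain ⟨v₀, hv₀⟩ := Finite.exists_max fun v => l (x v)
  obtain ⟨w₀, hw₀⟩ := Finite.exists_max fun w => l (y w)
  obtain ⟨φ, hφ⟩ := exists_apply_sliceVector_eq (l := l.toLinearMap) (ℓ := ℓ.toLinearMap) hl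
    (Sum.elim x y) Sum.isLeft (fun b => bif b then l (x v₀) else l (y w₀))
  simp only [Sum.forall, Sum.elim_inl, Sum.elim_inr, Sum.isLeft_inl, Sum.isLeft_inr, cond_true,
    cond_false, ContinuousLinearMap.coe_coe] at hφ
  refine ⟨_, ⟨φ, ?_, rfl⟩, ?_⟩
  · rintro (v | w)
    · simpa [hφ.1] using hv₀ v
    · simpa [hφ.2] using hw₀ w
  · rw [toExposed_add, toExposed_convexHull, toExposed_convexHull, toExposed_range hv₀,
      toExposed_range hw₀, labelHull]
    simp [mem_tight, hφ, sub_eq_zero]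

lemma facesToward_subset_image_tightSets (x : α → E) (y : β → E) (e : E) :
    ∃ γ, facesToward (convexHull ℝ (range x) + convexHull ℝ (range y)) e ⊆
      labelHull x y '' tightSets (sliceVector e (Sum.elim x y) Sum.isLeft) γ := by
  rcases (facesToward (convexHull ℝ (range x) + convexHull ℝ (range y)) e).eq_empty_or_nonempty
    with hempty | ⟨F₀, hF₀⟩
  · exact ⟨0, hempty.subset.trans (empty_subset _)⟩
  · obtain ⟨ℓ, hℓ, -⟩ := exists_apply_eq_one_of_mem_facesToward hF₀
    refine ⟨fun i => -ℓ (Sum.elim x y i), fun F hF => ?_⟩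
    obtain ⟨l, hl, rfl⟩ := exists_apply_eq_one_of_mem_facesToward hF
    exact toExposed_mem_image_tightSets (hl.trans hℓ.symm)

lemma ncard_facesToward_le [FiniteDimensional ℝ E] (x : α → E) (y : β → E) {e : E} (he : e ≠ 0)
    {m : ℕ} (hm : finrank ℝ E ≤ 2 * m + 3) :
    (facesToward (convexHull ℝ (range x) + convexHull ℝ (range y)) e).ncard ≤ 2 ^ (2 * m + 5) *
      (Fintype.card α * Fintype.card β * (Fintype.card α + Fintype.card β) ^ m) := by
  classical
  obtain ⟨γ, hγ⟩ := facesToward_subset_image_tightSets x y e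
  have hdim : finrank ℝ (Submodule.span ℝ (range (sliceVector e (Sum.elim x y) Sum.isLeft))) ≤
      2 * m + 4 :=
    (Submodule.finrank_le _).trans ((finrank_slice he).trans_le (Nat.succ_le_succ hm))
  have hsurj : Function.Surjective (Sum.isLeft : α ⊕ β → Bool) := fun b => by
    cases b
    exacts [‹Nonempty β›.elim fun w => ⟨.inr w, rfl⟩, ‹Nonempty α›.elim fun v => ⟨.inl v, rfl⟩]
  calc _ ≤ (tightSets (sliceVector e (Sum.elim x y) Sum.isLeft) γ).ncard :=
        (ncard_le_ncard hγ ((toFinite _).image _)).trans (ncard_image_le (toFinite _))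
    _ ≤ _ := ncard_tightSets_le (p := fun b => LinearMap.proj b ∘ₗ LinearMap.snd ℝ _ _)
      (fun b i => by simp [sliceVector, Pi.single_apply, eq_comm]) hsurj hdim γ
    _ = _ := by
      simp only [Finset.card_filter, Fintype.sum_sum_type, Fintype.card_sum]
      simp

end Fintype

lemma finite_facesToward [Finite α] [Finite β] [Nonempty α] [Nonempty β] (x : α → E) (y : β → E)
    (e : E) : (facesToward (convexHull ℝ (range x) + convexHull ℝ (range y)) e).Finite := by
  cases nonempty_fintype α
  cases nonempty_fintype β
  obtain ⟨_, h⟩ := facesToward_subset_image_tightSets x y e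
  exact ((toFinite _).image _).subset h

lemma setOf_isExposed_nonempty_subset {J : Type*} (b : Basis J ℝ E) (C : Set E) :
    {F | IsExposed ℝ C F ∧ F.Nonempty} ⊆
      insert C (⋃ j, facesToward C (b j) ∪ facesToward C (-b j)) := by
  rintro F ⟨hF, hne⟩
  obtain ⟨l, rfl⟩ := hF hne
  by_cases hl : ∃ j, l (b j) ≠ 0
  · obtain ⟨j, hj⟩ := hl
    exact .inr (mem_iUnion.2 ⟨j, hj.lt_or_gt.symm.imp (fun h => ⟨l, h, rfl⟩)
      fun h => ⟨l, by simpa using h, rfl⟩⟩)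
  · push Not at hl
    obtain rfl : l = 0 := ContinuousLinearMap.coe_injective (b.ext fun j => by simpa using hl j)
    simp

lemma ncard_setOf_isExposed_convexHull_range_add_le [FiniteDimensional ℝ E] [Fintype α]
    [Fintype β] [Nonempty α] [Nonempty β] (x : α → E) (y : β → E) {m : ℕ}
    (hm : finrank ℝ E ≤ 2 * m + 3) :
    {F | IsExposed ℝ (convexHull ℝ (range x) + convexHull ℝ (range y)) F ∧ F.Nonempty}.ncard ≤
      finrank ℝ E * (2 ^ (2 * m + 6) *
        (Fintype.card α * Fintype.card β * (Fintype.card α + Fintype.card β) ^ m)) + 1 := by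
  set C := convexHull ℝ (range x) + convexHull ℝ (range y)
  let b := Module.finBasis ℝ E
  have hpair : ∀ j, (facesToward C (b j) ∪ facesToward C (-b j)).ncard ≤ 2 ^ (2 * m + 6) *
      (Fintype.card α * Fintype.card β * (Fintype.card α + Fintype.card β) ^ m) := fun j =>
    (ncard_union_le _ _).trans <|
      (add_le_add (ncard_facesToward_le x y (b.ne_zero j) hm)
        (ncard_facesToward_le x y (neg_ne_zero.2 (b.ne_zero j)) hm)).trans_eq (by ring)
  calc {F | IsExposed ℝ C F ∧ F.Nonempty}.ncard
      ≤ (insert C (⋃ j, facesToward C (b j) ∪ facesToward C (-b j))).ncard :=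
        ncard_le_ncard (setOf_isExposed_nonempty_subset b C) <| .insert _ <| finite_iUnion
          fun j => (finite_facesToward x y _).union (finite_facesToward x y _)
    _ ≤ ∑ j, (facesToward C (b j) ∪ facesToward C (-b j)).ncard + 1 :=
      (ncard_insert_le _ _).trans (Nat.succ_le_succ (ncard_iUnion_le_of_fintype _))
    _ ≤ _ := by
      refine Nat.succ_le_succ ((Finset.sum_le_card_nsmul _ _ _ fun j _ => hpair j).trans_eq ?_)
      rw [Finset.card_fin, smul_eq_mul]

end Faces

lemma convexHull_extremePoints_convexHull {E : Type*} [AddCommGroup E] [Module ℝ E]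
    [TopologicalSpace E] [IsTopologicalAddGroup E] [ContinuousSMul ℝ E] [T2Space E]
    [LocallyConvexSpace ℝ E] {A : Set E} (hA : A.Finite) :
    convexHull ℝ ((convexHull ℝ A).extremePoints ℝ) = convexHull ℝ A := by
  have hfin : ((convexHull ℝ A).extremePoints ℝ).Finite := hA.subset extremePoints_convexHull_subset
  rw [← (hfin.isClosed_convexHull ℝ).closure_eq]
  exact closure_convexHull_extremePoints (hA.isCompact_convexHull ℝ) (convex_convexHull ℝ A)

lemma mul_mul_add_pow_le (n m j : ℕ) :
    n * m * (n + m) ^ j ≤ 2 ^ j * (n * m ^ (j + 1) + m * n ^ (j + 1)) := by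
  calc n * m * (n + m) ^ j ≤ n * m * (2 ^ (j - 1) * (n ^ j + m ^ j)) := by
        gcongr
        exact add_pow_le n.zero_le m.zero_le j
    _ ≤ n * m * (2 ^ j * (n ^ j + m ^ j)) := by
      gcongr
      exacts [one_le_two, j.sub_le 1]
    _ = _ := by ring

lemma totalFaces_empty {N : ℕ} : totalFaces (∅ : Set (EuclideanSpace ℝ (Fin N))) = 0 := by
  have hempty : {F : Set (EuclideanSpace ℝ (Fin N)) | IsExposed ℝ ∅ F ∧ F.Nonempty} = ∅ :=
    eq_empty_of_forall_notMem fun F hF => hF.2.ne_empty (subset_empty_iff.1 hF.1.subset)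
  rw [totalFaces, hempty, ncard_empty]

lemma totalFaces_convexHull_add_le {N k : ℕ} (hk : N ≤ 2 * k + 3)
    {A B : Set (EuclideanSpace ℝ (Fin N))} (hA : A.Finite) (hB : B.Finite) :
    totalFaces (convexHull ℝ A + convexHull ℝ B) ≤ (N * 2 ^ (3 * k + 6) + 1) *
      (A.ncard * B.ncard ^ (k + 1) + B.ncard * A.ncard ^ (k + 1)) := by
  rcases A.eq_empty_or_nonempty with rfl | hA₀
  · simp [totalFaces_empty]
  rcases B.eq_empty_or_nonempty with rfl | hB₀
  · simp [totalFaces_empty]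
  have := hA.fintype
  have := hB.fintype
  have := hA₀.to_subtype
  have := hB₀.to_subtype
  have hcount := ncard_setOf_isExposed_convexHull_range_add_le (Subtype.val : A → _)
    (Subtype.val : B → _) (finrank_euclideanSpace_fin.trans_le hk)
  rw [finrank_euclideanSpace_fin, Subtype.range_coe, Subtype.range_coe, ← Nat.card_eq_fintype_card,
    ← Nat.card_eq_fintype_card, Nat.card_coe_set_eq, Nat.card_coe_set_eq] at hcount
  have hpos : 1 ≤ A.ncard * B.ncard ^ (k + 1) + B.ncard * A.ncard ^ (k + 1) :=
    Nat.add_pos_left (mul_pos ((ncard_pos hA).2 hA₀) (pow_pos ((ncard_pos hB).2 hB₀) _)) _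
  calc totalFaces (convexHull ℝ A + convexHull ℝ B)
      ≤ N * (2 ^ (2 * k + 6) * (A.ncard * B.ncard * (A.ncard + B.ncard) ^ k)) + 1 := hcount
    _ ≤ N * (2 ^ (2 * k + 6) *
          (2 ^ k * (A.ncard * B.ncard ^ (k + 1) + B.ncard * A.ncard ^ (k + 1)))) +
        (A.ncard * B.ncard ^ (k + 1) + B.ncard * A.ncard ^ (k + 1)) :=
      add_le_add (Nat.mul_le_mul_left _ (Nat.mul_le_mul_left _ (mul_mul_add_pow_le _ _ _))) hpos
    _ = _ := by ring

theorem stmt12_general (d : ℕ) (hd : 2 ≤ d) :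
    ∃ c : ℝ, 0 < c ∧
      ∀ V W : Set (EuclideanSpace ℝ (Fin d)),
        V.Finite → W.Finite →
        (totalFaces (convexHull ℝ V + convexHull ℝ W) : ℝ) ≤
          c * ((((convexHull ℝ V).extremePoints ℝ).ncard : ℝ) *
                (((convexHull ℝ W).extremePoints ℝ).ncard : ℝ) ^ (d / 2) +
              (((convexHull ℝ W).extremePoints ℝ).ncard : ℝ) *
                (((convexHull ℝ V).extremePoints ℝ).ncard : ℝ) ^ (d / 2)) := by
  obtain ⟨k, hk⟩ : ∃ k, d / 2 = k + 1 := ⟨d / 2 - 1, by omega⟩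
  refine ⟨d * 2 ^ (3 * k + 6) + 1, by positivity, fun V W hV hW => ?_⟩
  have hfaces := totalFaces_convexHull_add_le (k := k) (by omega)
    (hV.subset (extremePoints_convexHull_subset (𝕜 := ℝ)))
    (hW.subset (extremePoints_convexHull_subset (𝕜 := ℝ)))
  rw [convexHull_extremePoints_convexHull hV, convexHull_extremePoints_convexHull hW] at hfaces
  rw [hk]
  exact_mod_cast hfaces

theorem stmt12 (d : ℕ) (hd : 3 ≤ d) (hodd : Odd d) :
    ∃ c : ℝ, 0 < c ∧
      ∀ V W : Set (EuclideanSpace ℝ (Fin d)),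
        V.Finite → W.Finite →
        adim (convexHull ℝ V) = d → adim (convexHull ℝ W) = d →
        (totalFaces (convexHull ℝ V + convexHull ℝ W) : ℝ) ≤
          c * ((((convexHull ℝ V).extremePoints ℝ).ncard : ℝ) *
                (((convexHull ℝ W).extremePoints ℝ).ncard : ℝ) ^ (d / 2) +
              (((convexHull ℝ W).extremePoints ℝ).ncard : ℝ) *
                (((convexHull ℝ V).extremePoints ℝ).ncard : ℝ) ^ (d / 2)) := by
  obtain ⟨c, hc, h⟩ := stmt12_general d (by omega)
  exact ⟨c, hc, fun V W hV hW _ _ => h V W hV hW⟩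
end
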